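/- arXiv:2412.19485 — 5 statements merged into one kernel-verified Lean document; each statement's English description precedes it below -/
import Mathlib

section
/- Let S be a factorizable inverse monoid with semilattice of idempotents E and group of units G, and let θ be the natural connection. Then: (i) for every idempotent e, the filter e↑ equals [e,1]·eθ = {e′g : e′ ∈ E, e ≤ e′, g ∈ eθ}; in particular e↑ is a factorizable inverse monoid with semilattice of idempotents [e,1] and group of units eθ; (ii) eS = [0,e]·G = {e′g : e′ ∈ E, e′ ≤ e, g ∈ G}; (iii) if f is an idempotent that is central in e↑, then F_{e,f} = f·e↑ = [e,f]·eθ = {e′g : e′ ∈ E, e ≤ e′ ≤ f, g ∈ eθ} and the group of units of F_{e,f} is UF_{e,f} = f·eθ = {fg : g ∈ eθ}. -/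
/-- An inverse monoid: a monoid in which every element `a` has an inverse `a⁻¹`
satisfying `a * a⁻¹ * a = a` and `a⁻¹ * a * a⁻¹ = a⁻¹`, and this inverse is unique. -/
class InverseMonoid (S : Type*) extends Monoid S, Inv S where
  mul_inv_mul : ∀ a : S, a * a⁻¹ * a = a
  inv_mul_inv : ∀ a : S, a⁻¹ * a * a⁻¹ = a⁻¹
  inv_unique : ∀ a b : S, a * b * a = a → b * a * b = b → b = a⁻¹

/-- An inverse monoid with a (two-sided absorbing) zero element. -/
class InverseMonoidWithZero (S : Type*) extends InverseMonoid S, Zero S where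
  zero_mul : ∀ a : S, 0 * a = 0
  mul_zero : ∀ a : S, a * 0 = 0

/-- The natural partial order on an inverse monoid: `a ≤ b` iff `a = e * b`
for some idempotent `e`. -/
def NatLe {S : Type*} [Monoid S] (a b : S) : Prop :=
  ∃ e : S, IsIdempotentElem e ∧ a = e * b

/-- The filter `e↑ = {s | e ≤ s}` generated by `e`. -/
def upfilter {S : Type*} [Monoid S] (e : S) : Set S := {s | NatLe e s}

/-- `c` is central in (a subset) `T`: it belongs to `T` and commutes with all elements of `T`. -/
def CentralIn {S : Type*} [Mul S] (T : Set S) (c : S) : Prop :=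
  c ∈ T ∧ ∀ s ∈ T, c * s = s * c

/-- A monoid is factorizable if every element is a product of an idempotent and a unit. -/
def Factorizable (S : Type*) [Monoid S] : Prop :=
  ∀ s : S, ∃ e g : S, IsIdempotentElem e ∧ IsUnit g ∧ s = e * g

/-- The natural connection `θ`: for an (idempotent) `e`, the subgroup
`eθ = {g ∈ G : e * g = e}` of the group of units. -/
def natconn {S : Type*} [Monoid S] (e : S) : Subgroup Sˣ where
  carrier := {g : Sˣ | e * (g : S) = e}
  one_mem' := by simp
  mul_mem' := by
    intro a b ha hb
    simp only [Set.mem_setOf_eq, Units.val_mul] at *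
    rw [← mul_assoc, ha, hb]
  inv_mem' := by
    intro a ha
    simp only [Set.mem_setOf_eq] at *
    nth_rewrite 1 [← ha]
    rw [mul_assoc, ← Units.val_mul, mul_inv_cancel, Units.val_one, mul_one]

/-- The natural connection is a dual isomorphism from the idempotents onto a
sublattice of the lattice of subgroups of the group of units: it is injective on
idempotents, order-reversing in both directions, and its image is closed under
joins and meets of subgroups. -/
def NatconnDualIso (S : Type*) [Monoid S] : Prop :=
  (∀ e f : S, IsIdempotentElem e → IsIdempotentElem f → natconn e = natconn f → e = f) ∧
  (∀ e f : S, IsIdempotentElem e → IsIdempotentElem f →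
    (NatLe e f ↔ natconn f ≤ natconn e)) ∧
  (∀ e f : S, IsIdempotentElem e → IsIdempotentElem f →
    (∃ h : S, IsIdempotentElem h ∧ natconn h = natconn e ⊔ natconn f) ∧
    (∃ h : S, IsIdempotentElem h ∧ natconn h = natconn e ⊓ natconn f))

/-- `j` is the join (least upper bound) of `e` and `f` with respect to the natural order. -/
def IsNatJoin {S : Type*} [Monoid S] (e f j : S) : Prop :=
  NatLe e j ∧ NatLe f j ∧ ∀ x : S, NatLe e x → NatLe f x → NatLe j x

/-- `F_{e,f} = f · e↑`. -/
def Fef {S : Type*} [Monoid S] (e f : S) : Set S := (f * ·) '' upfilter e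

/-- `UF_{e,f}`: the group of units of the monoid `F_{e,f}` (whose identity is `f`). -/
def UFef {S : Type*} [Monoid S] (e f : S) : Set S :=
  {x ∈ Fef e f | ∃ y ∈ Fef e f, x * y = f ∧ y * x = f}

/-- The centre of a subset `T`. -/
def ZIn {S : Type*} [Mul S] (T : Set S) : Set S := {x ∈ T | ∀ y ∈ T, x * y = y * x}

/-- Two subsets are isomorphic as semigroups (with the induced multiplication). -/
def SubIso {S : Type*} [Mul S] (A B : Set S) : Prop :=
  ∃ φ : S → S, Set.BijOn φ A B ∧ ∀ a ∈ A, ∀ b ∈ A, φ (a * b) = φ a * φ b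

/-- A subcentral idempotent series between `0` and `a`. -/
def IsSubcentralSeriesBetween {S : Type*} [Monoid S] [Zero S] (n : ℕ) (c : ℕ → S) (a : S) :
    Prop :=
  c 0 = 0 ∧ c n = a ∧ (∀ i ≤ n, IsIdempotentElem (c i)) ∧
    ∀ i < n, CentralIn (upfilter (c i)) (c (i + 1))

/-- A subcentral idempotent series of `S` (between `0` and `1`). -/
def IsSubcentralSeries {S : Type*} [Monoid S] [Zero S] (n : ℕ) (c : ℕ → S) : Prop :=
  IsSubcentralSeriesBetween n c 1

/-- A central idempotent series of `S`. -/
def IsCentralSeries {S : Type*} [Monoid S] [Zero S] (n : ℕ) (c : ℕ → S) : Prop :=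
  c 0 = 0 ∧ c n = 1 ∧ (∀ i ≤ n, IsIdempotentElem (c i)) ∧
    (∀ i < n, NatLe (c i) (c (i + 1))) ∧
    ∀ i < n, CentralIn Set.univ (c (i + 1))

/-- A subcentral idempotent: one occurring in some subcentral idempotent series of `S`. -/
def IsSubcentralIdem {S : Type*} [Monoid S] [Zero S] (e : S) : Prop :=
  ∃ (n : ℕ) (c : ℕ → S), IsSubcentralSeries n c ∧ ∃ i ≤ n, c i = e

/-- A `G`-nilpotent series: a chain of central idempotents from `0` to `1` with
`F_{eᵢ,eᵢ₊₁} ⊆ Z(F_{0,eᵢ₊₁})`. -/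
def GNilpotentSeries {S : Type*} [Monoid S] [Zero S] (n : ℕ) (c : ℕ → S) : Prop :=
  c 0 = 0 ∧ c n = 1 ∧ (∀ i ≤ n, IsIdempotentElem (c i) ∧ CentralIn Set.univ (c i)) ∧
    (∀ i < n, NatLe (c i) (c (i + 1))) ∧
    ∀ i < n, Fef (c i) (c (i + 1)) ⊆ ZIn (Fef 0 (c (i + 1)))

/-- A `G`-solvable series: a chain of central idempotents from `0` to `1` with
each `F_{eᵢ,eᵢ₊₁}` commutative. -/
def GSolvableSeries {S : Type*} [Monoid S] [Zero S] (n : ℕ) (c : ℕ → S) : Prop :=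
  c 0 = 0 ∧ c n = 1 ∧ (∀ i ≤ n, IsIdempotentElem (c i) ∧ CentralIn Set.univ (c i)) ∧
    (∀ i < n, NatLe (c i) (c (i + 1))) ∧
    ∀ i < n, ∀ x ∈ Fef (c i) (c (i + 1)), ∀ y ∈ Fef (c i) (c (i + 1)), x * y = y * x

/-- `S` is `G`-nilpotent. -/
def GNilpotent (S : Type*) [Monoid S] [Zero S] : Prop :=
  ∃ (n : ℕ) (c : ℕ → S), GNilpotentSeries n c

/-- `S` is `G`-solvable. -/
def GSolvable (S : Type*) [Monoid S] [Zero S] : Prop :=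
  ∃ (n : ℕ) (c : ℕ → S), GSolvableSeries n c

/-- Two idempotent series are isomorphic: same length, and a one-to-one correspondence
between their factors under which corresponding factors are isomorphic. -/
def SeriesIso {S : Type*} [Monoid S] (n : ℕ) (c : ℕ → S) (n' : ℕ) (d : ℕ → S) : Prop :=
  n = n' ∧ ∃ σ : ℕ → ℕ, Set.BijOn σ {i | i < n} {i | i < n'} ∧
    ∀ i < n, SubIso (Fef (c i) (c (i + 1))) (Fef (d (σ i)) (d (σ i + 1)))

/-- A composition series (for a kind `P` of series): it has no repeated terms, and any
refinement of it (of the same kind) only repeats its terms. -/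
def IsCompositionOf {S : Type*} (P : ℕ → (ℕ → S) → Prop) (n : ℕ) (c : ℕ → S) : Prop :=
  P n c ∧ (∀ i ≤ n, ∀ j ≤ n, c i = c j → i = j) ∧
    ∀ (m : ℕ) (d : ℕ → S), P m d → (∀ i ≤ n, ∃ j ≤ m, d j = c i) →
      ∀ j ≤ m, ∃ i ≤ n, d j = c i

theorem idem_inv_aux {S : Type*} [InverseMonoid S] {e f : S} (he : IsIdempotentElem e)
    (hf : IsIdempotentElem f) : IsIdempotentElem (e * f) := by
  have he' : ∀ z, e * (e * z) = e * z := fun z => by rw [← mul_assoc, he.eq]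
  have hf' : ∀ z, f * (f * z) = f * z := fun z => by rw [← mul_assoc, hf.eq]
  have h1 := InverseMonoid.mul_inv_mul (e * f)
  have h2 := InverseMonoid.inv_mul_inv (e * f)
  have h3 := InverseMonoid.inv_unique (e * f) (f * (e * f)⁻¹ * e)
  generalize (e * f)⁻¹ = x at h1 h2 h3
  have h2' : ∀ z, x * (e * (f * (x * z))) = x * z := fun z => by
    conv_rhs => rw [← h2]
    simp only [mul_assoc]
  simp only [mul_assoc] at h1 h2 h3
  have h4 := h3 (by rw [hf', he', h1]) (by rw [he', hf', h2'])
  have hx : x * x = x := by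
    rw [← h4]
    simp only [mul_assoc]
    rw [h2']
  have a1 := InverseMonoid.inv_unique x x (by rw [hx, hx]) (by rw [hx, hx])
  have a2 := InverseMonoid.inv_unique x (e * f) (by simpa only [mul_assoc] using h2)
    (by simpa only [mul_assoc] using h1)
  have a3 : e * f = x := a2.trans a1.symm
  rw [a3]
  exact hx

theorem idem_comm_aux {S : Type*} [InverseMonoid S] {e f : S} (he : IsIdempotentElem e)
    (hf : IsIdempotentElem f) : e * f = f * e := by
  have he' : ∀ z, e * (e * z) = e * z := fun z => by rw [← mul_assoc, he.eq]
  have hf' : ∀ z, f * (f * z) = f * z := fun z => by rw [← mul_assoc, hf.eq]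
  have h1 := idem_inv_aux he hf
  have h2 := idem_inv_aux hf he
  have a1 := InverseMonoid.inv_unique (e * f) (e * f) (by rw [h1.eq, h1.eq]) (by rw [h1.eq, h1.eq])
  have h1' := h1.eq
  have h2' := h2.eq
  simp only [mul_assoc] at h1' h2'
  have a2 := InverseMonoid.inv_unique (e * f) (f * e)
    (by simp only [mul_assoc]; rw [hf', he', h1'])
    (by simp only [mul_assoc]; rw [he', hf', h2'])
  exact a1.trans a2.symm

theorem natLe_idem_aux {S : Type*} [InverseMonoid S] {e s : S} (he : IsIdempotentElem e) :
    NatLe e s ↔ e * s = e := by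
  constructor
  · rintro ⟨h, hh, hs⟩
    have h1 : h * e = e := by
      rw [hs, ← mul_assoc, hh.eq]
    calc e * s = h * e * s := by rw [h1]
      _ = e * (h * s) := by rw [← idem_comm_aux he hh, mul_assoc]
      _ = e := by rw [← hs, he.eq]
  · intro h
    exact ⟨e, he, h.symm⟩

theorem fact_aux {S : Type*} [InverseMonoid S] {e h g : S} (he : IsIdempotentElem e)
    (hh : IsIdempotentElem h) (H : e * (h * g) = e) : e * h = e ∧ e * g = e := by
  have h1 : e * h = e := by
    rw [idem_comm_aux he hh]
    calc h * e = h * (e * (h * g)) := by rw [H]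
      _ = (h * e) * (h * g) := by rw [mul_assoc]
      _ = (e * h) * (h * g) := by rw [idem_comm_aux he hh]
      _ = e * ((h * h) * g) := by simp only [mul_assoc]
      _ = e := by rw [hh.eq, H]
  refine ⟨h1, ?_⟩
  rwa [← mul_assoc, h1] at H

/-- In a factorizable inverse monoid `S` with idempotents `E` and
group of units `G`: (i) `e↑ = [e,1]·eθ`; (ii) `eS = [0,e]·G`;
(iii) if `f` is central in `e↑` then `F_{e,f} = f·e↑ = [e,f]·eθ` and
`UF_{e,f} = f·eθ`. -/
theorem stmt_0 {S : Type*} [InverseMonoid S] (hfact : Factorizable S)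
    (e f : S) (he : IsIdempotentElem e) (hf : IsIdempotentElem f)
    (hcf : CentralIn (upfilter e) f) :
    upfilter e = {x : S | ∃ e' g : S, IsIdempotentElem e' ∧ NatLe e e' ∧
        IsUnit g ∧ e * g = e ∧ x = e' * g} ∧
    {x : S | ∃ y : S, x = e * y} = {x : S | ∃ e' g : S, IsIdempotentElem e' ∧ NatLe e' e ∧
        IsUnit g ∧ x = e' * g} ∧
    Fef e f = {x : S | ∃ e' g : S, IsIdempotentElem e' ∧ NatLe e e' ∧ NatLe e' f ∧
        IsUnit g ∧ e * g = e ∧ x = e' * g} ∧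
    UFef e f = {x : S | ∃ g : S, IsUnit g ∧ e * g = e ∧ x = f * g} := by
  have hef : e * f = e := (natLe_idem_aux he).1 hcf.1
  have part3 : Fef e f = {x : S | ∃ e' g : S, IsIdempotentElem e' ∧ NatLe e e' ∧ NatLe e' f ∧
        IsUnit g ∧ e * g = e ∧ x = e' * g} := by
    ext x
    constructor
    · rintro ⟨s, hs, rfl⟩
      obtain ⟨h, g, hh, hg, rfl⟩ := hfact s
      obtain ⟨h1, h2⟩ := fact_aux he hh ((natLe_idem_aux he).1 hs)
      refine ⟨f * h, g, idem_inv_aux hf hh, ?_, ⟨h, hh, idem_comm_aux hf hh⟩, hg, h2, ?_⟩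
      · rw [natLe_idem_aux he, ← mul_assoc, hef, h1]
      · simp only [mul_assoc]
    · rintro ⟨h, g, hh, h1, h2, hg, h3, rfl⟩
      rw [natLe_idem_aux he] at h1
      rw [natLe_idem_aux hh] at h2
      refine ⟨h * g, ?_, ?_⟩
      · show NatLe e (h * g)
        rw [natLe_idem_aux he, ← mul_assoc, h1, h3]
      · show f * (h * g) = h * g
        rw [← mul_assoc, idem_comm_aux hf hh, h2]
  refine ⟨?_, ?_, part3, ?_⟩
  · ext x
    constructor
    · intro hx
      obtain ⟨h, g, hh, hg, rfl⟩ := hfact x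
      obtain ⟨h1, h2⟩ := fact_aux he hh ((natLe_idem_aux he).1 hx)
      exact ⟨h, g, hh, (natLe_idem_aux he).2 h1, hg, h2, rfl⟩
    · rintro ⟨h, g, hh, h1, hg, h3, rfl⟩
      rw [natLe_idem_aux he] at h1
      show NatLe e (h * g)
      rw [natLe_idem_aux he, ← mul_assoc, h1, h3]
  · ext x
    constructor
    · rintro ⟨y, rfl⟩
      obtain ⟨h, g, hh, hg, rfl⟩ := hfact y
      exact ⟨e * h, g, idem_inv_aux he hh, ⟨h, hh, idem_comm_aux he hh⟩, hg,
        (mul_assoc _ _ _).symm⟩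
    · rintro ⟨h, g, hh, h1, hg, rfl⟩
      rw [natLe_idem_aux hh] at h1
      exact ⟨h * g, by rw [← mul_assoc, idem_comm_aux he hh, h1]⟩
  · ext x
    constructor
    · rintro ⟨hx, y, hy, hxy, -⟩
      rw [part3] at hx
      obtain ⟨h, g, hh, h1, h2, hg, h3, rfl⟩ := hx
      rw [natLe_idem_aux hh] at h2
      have h4 : h * f = f := by
        rw [← hxy]
        simp only [← mul_assoc]
        rw [hh.eq]
      exact ⟨g, hg, h3, by rw [← h4, h2]⟩
    · rintro ⟨_, ⟨u, rfl⟩, h3, rfl⟩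
      have h4 : e * ((u⁻¹ : Sˣ) : S) = e := by
        conv_lhs => rw [← h3]
        rw [mul_assoc, Units.mul_inv, mul_one]
      have m1 : (u : S) ∈ upfilter e := (natLe_idem_aux he).2 h3
      have m2 : ((u⁻¹ : Sˣ) : S) ∈ upfilter e := (natLe_idem_aux he).2 h4
      refine ⟨⟨_, m1, rfl⟩, f * ((u⁻¹ : Sˣ) : S), ⟨_, m2, rfl⟩, ?_, ?_⟩
      · rw [hcf.2 _ m2, mul_assoc, ← mul_assoc (u : S), Units.mul_inv, one_mul, hf.eq]
      · rw [hcf.2 _ m1, mul_assoc, ← mul_assoc ((u⁻¹ : Sˣ) : S), Units.inv_mul, one_mul, hf.eq]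
end

section
/- Let S be a factorizable inverse monoid with semilattice of idempotents E. (iii) If e, f ∈ E, e is central in S (resp. both e and f are central in S), and the join e∨f exists in S, then e∨f is an idempotent that is central in f↑ (resp. central in S). (iv) If e₁, e₂, f ∈ E, e₁ is central in e₂↑, and the joins e₁∨f and e₂∨f exist in S, then e₁∨f is central in (e₂∨f)↑. -/
namespace StmtAux

variable {S : Type*} [InverseMonoid S]

theorem inv_idem {e : S} (he : IsIdempotentElem e) : e = e⁻¹ := by
  apply InverseMonoid.inv_unique <;> rw [he.eq, he.eq]

/-- The product of two idempotents is idempotent. -/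
theorem idem_mul {e f : S} (he : IsIdempotentElem e) (hf : IsIdempotentElem f) :
    IsIdempotentElem (e * f) := by
  have he' : ∀ x, e * (e * x) = e * x := fun x => by rw [← mul_assoc, he.eq]
  have hf' : ∀ x, f * (f * x) = f * x := fun x => by rw [← mul_assoc, hf.eq]
  have h1 := InverseMonoid.mul_inv_mul (e * f)
  have h2 := InverseMonoid.inv_mul_inv (e * f)
  have h3 : f * (e * f)⁻¹ * e = (e * f)⁻¹ := by
    generalize (e * f)⁻¹ = x at *
    have := InverseMonoid.inv_unique (e * f) (f * x * e)
      (by simp only [mul_assoc, he', hf'] at *; exact h1)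
      (by
        simp only [mul_assoc, he', hf'] at *
        rw [← mul_assoc x e, ← mul_assoc (x * e), ← mul_assoc (x * e * f)]
        simp only [mul_assoc] at *
        have h4 : x * (e * (f * (x * e))) = x * e := by
          have := congrArg (· * e) h2
          simpa only [mul_assoc] using this
        rw [h4])
    have h5 := InverseMonoid.inv_unique (e * f) x h1 h2
    rw [this, ← h5]
  have h4 : IsIdempotentElem (e * f)⁻¹ := by
    generalize (e * f)⁻¹ = x at *
    have : (f * x * e) * (f * x * e) = f * (x * (e * f) * x) * e := by
      simp only [mul_assoc]
    rw [h2, h3] at this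
    exact this
  have h5 := InverseMonoid.inv_unique (e * f)⁻¹ (e * f) h2 h1
  rw [h5, ← inv_idem h4]
  exact h4

theorem idem_comm {e f : S} (he : IsIdempotentElem e) (hf : IsIdempotentElem f) :
    e * f = f * e := by
  have he' : ∀ x, e * (e * x) = e * x := fun x => by rw [← mul_assoc, he.eq]
  have hf' : ∀ x, f * (f * x) = f * x := fun x => by rw [← mul_assoc, hf.eq]
  have h1 := (idem_mul he hf).eq
  have h2 := (idem_mul hf he).eq
  have h3 := InverseMonoid.inv_unique (e * f) (f * e)
    (by simp only [mul_assoc, he', hf'] at *; exact h1)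
    (by simp only [mul_assoc, he', hf'] at *; exact h2)
  rw [h3]
  exact inv_idem (idem_mul he hf)

theorem le_idem {e x : S} (hx : IsIdempotentElem x) (h : NatLe e x) : e * x = e := by
  obtain ⟨k, _, rfl⟩ := h
  rw [mul_assoc, hx.eq]

theorem join_idem {e f j : S} (he : IsIdempotentElem e) (hf : IsIdempotentElem f)
    (h : IsNatJoin e f j) : IsIdempotentElem j := by
  obtain ⟨k, hk, rfl⟩ := h.2.2 1 ⟨e, he, by simp⟩ ⟨f, hf, by simp⟩
  simpa using hk

theorem conj_idem {j : S} (hj : IsIdempotentElem j) (u : Sˣ) :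
    IsIdempotentElem ((u : S) * j * (u⁻¹ : Sˣ)) := by
  have : (u : S) * j * (u⁻¹ : Sˣ) * ((u : S) * j * (u⁻¹ : Sˣ)) = (u : S) * (j * j) * (u⁻¹ : Sˣ) := by
    simp [mul_assoc]
  rw [hj.eq] at this
  exact this

theorem join_le_conj {e f j : S} (he : IsIdempotentElem e) (hf : IsIdempotentElem f)
    (h : IsNatJoin e f j) (u : Sˣ) (h1 : e * u = u * e) (h2 : f * u = u * f) :
    j * (u * j * (u⁻¹ : Sˣ)) = j := by
  have hj := join_idem he hf h
  apply le_idem (conj_idem hj u)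
  have key : ∀ a : S, a * u = u * a → NatLe a j → a = a * (u * j * (u⁻¹ : Sˣ)) := by
    intro a ha hl
    rw [← mul_assoc, ← mul_assoc, ha, mul_assoc (u : S), le_idem hj hl, ← ha]
    simp
  exact h.2.2 _ ⟨e, he, key e h1 h.1⟩ ⟨f, hf, key f h2 h.2.1⟩

theorem join_comm_unit {e f j : S} (he : IsIdempotentElem e) (hf : IsIdempotentElem f)
    (h : IsNatJoin e f j) (u : Sˣ) (h1 : e * u = u * e) (h2 : f * u = u * f) :
    j * u = u * j := by
  have hj := join_idem he hf h
  have flip : ∀ a : S, a * u = u * a → a * (u⁻¹ : Sˣ) = (u⁻¹ : Sˣ) * a := by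
    intro a ha
    rw [Units.mul_inv_eq_iff_eq_mul, mul_assoc, ha]
    simp
  have a1 := join_le_conj he hf h u h1 h2
  have a2 := join_le_conj he hf h u⁻¹ (flip e h1) (flip f h2)
  rw [idem_comm hj (conj_idem hj u⁻¹)] at a2
  have b1 : j * u * j = j * u := by
    rw [← mul_assoc, ← mul_assoc, Units.mul_inv_eq_iff_eq_mul] at a1
    exact a1
  have b2 : j * u * j = u * j := by
    have := congrArg ((u : S) * ·) a2
    simpa [← mul_assoc] using this
  rw [← b1, b2]

/-- If `s = h * g ≥ f`, then `f * g = f` and `g * f = f`. -/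
theorem fix_right {f h : S} (hf : IsIdempotentElem f) (hh : IsIdempotentElem h) (g : Sˣ)
    (hl : NatLe f (h * g)) : f * g = f := by
  obtain ⟨k, hk, hfk⟩ := hl
  rw [← mul_assoc] at hfk
  have hkh := idem_mul hk hh
  have h1 : f * (g⁻¹ : Sˣ) = k * h := by rw [Units.mul_inv_eq_iff_eq_mul]; exact hfk
  have h2 : (k * h) * f = f := by rw [hfk, ← mul_assoc, hkh.eq]
  have h3 : f * (k * h) = k * h := by rw [← h1, ← mul_assoc, hf.eq]
  have h4 : k * h = f := by rw [← h3, idem_comm hf hkh, h2]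
  rw [h4] at hfk
  exact hfk.symm

theorem fix_left {f : S} (hf : IsIdempotentElem f) (g : Sˣ) (h : f * g = f) : g * f = f := by
  have h1 : f * (g⁻¹ : Sˣ) = f := by rw [Units.mul_inv_eq_iff_eq_mul, h]
  have h2 := conj_idem hf g
  rw [mul_assoc, h1] at h2
  have h3 := idem_comm hf h2
  rw [← mul_assoc, h, hf.eq, mul_assoc, hf.eq] at h3
  exact h3.symm

theorem comm_of_fact {j h : S} (hj : IsIdempotentElem j) (hh : IsIdempotentElem h) (g : Sˣ)
    (hc : j * g = g * j) : j * (h * g) = h * g * j := by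
  rw [← mul_assoc, idem_comm hj hh, mul_assoc, hc, mul_assoc]

end StmtAux

/-- In a factorizable inverse monoid:
(iii) if `e` is central in `S` (resp. both `e` and `f` are central) and `e ∨ f` exists,
then `e ∨ f` is an idempotent central in `f↑` (resp. central in `S`);
(iv) if `e₁` is central in `e₂↑` and `e₁ ∨ f`, `e₂ ∨ f` exist, then `e₁ ∨ f` is central
in `(e₂ ∨ f)↑`. -/
theorem stmt_2 {S : Type*} [InverseMonoid S] (hfact : Factorizable S) :
    (∀ e f j : S, IsIdempotentElem e → IsIdempotentElem f →
      CentralIn Set.univ e → IsNatJoin e f j →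
      IsIdempotentElem j ∧ CentralIn (upfilter f) j) ∧
    (∀ e f j : S, IsIdempotentElem e → IsIdempotentElem f →
      CentralIn Set.univ e → CentralIn Set.univ f → IsNatJoin e f j →
      IsIdempotentElem j ∧ CentralIn Set.univ j) ∧
    (∀ e₁ e₂ f j₁ j₂ : S, IsIdempotentElem e₁ → IsIdempotentElem e₂ → IsIdempotentElem f →
      CentralIn (upfilter e₂) e₁ → IsNatJoin e₁ f j₁ → IsNatJoin e₂ f j₂ →
      CentralIn (upfilter j₂) j₁) := by
  open StmtAux in
  refine ⟨?_, ?_, ?_⟩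
  · intro e f j he hf hc hjoin
    have hj := join_idem he hf hjoin
    refine ⟨hj, hjoin.2.1, ?_⟩
    intro s hs
    obtain ⟨h, _, hh, ⟨g, rfl⟩, rfl⟩ := hfact s
    have h1 := fix_right hf hh g hs
    have h2 := fix_left hf g h1
    exact comm_of_fact hj hh g
      (join_comm_unit he hf hjoin g (hc.2 _ (Set.mem_univ _)) (h1.trans h2.symm))
  · intro e f j he hf hc hc' hjoin
    have hj := join_idem he hf hjoin
    refine ⟨hj, Set.mem_univ _, ?_⟩
    intro s _
    obtain ⟨h, _, hh, ⟨g, rfl⟩, rfl⟩ := hfact s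
    exact comm_of_fact hj hh g
      (join_comm_unit he hf hjoin g (hc.2 _ (Set.mem_univ _)) (hc'.2 _ (Set.mem_univ _)))
  · intro e₁ e₂ f j₁ j₂ he₁ he₂ hf hc hjoin₁ hjoin₂
    have hj₁ := join_idem he₁ hf hjoin₁
    have hj₂ := join_idem he₂ hf hjoin₂
    constructor
    · refine hjoin₂.2.2 _ ⟨e₂, he₂, ?_⟩ hjoin₁.2.1
      have h1 := le_idem he₁ hc.1
      have h2 := le_idem hj₁ hjoin₁.1
      rw [← h1, mul_assoc, h2]
    · intro s hs
      obtain ⟨h, _, hh, ⟨g, rfl⟩, rfl⟩ := hfact s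
      have h1 := fix_right hj₂ hh g hs
      have k1 : e₂ * g = e₂ := by
        rw [← le_idem hj₂ hjoin₂.1, mul_assoc, h1]
      have k2 : f * g = f := by
        rw [← le_idem hj₂ hjoin₂.2.1, mul_assoc, h1]
      exact comm_of_fact hj₁ hh g
        (join_comm_unit he₁ hf hjoin₁ g (hc.2 _ ⟨e₂, he₂, k1.symm⟩)
          (k2.trans (fix_left hf g k2).symm))
end

section
/- Let S be a factorizable inverse monoid with zero, with semilattice of idempotents E and group of units G, such that the natural connection θ is a dual isomorphism from E onto a sublattice of L(G). Then every finite chain e₁ ≤ e₂ ≤ ⋯ ≤ eₙ of subcentral idempotents of S can be refined to a subcentral idempotent series of S. -/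
namespace SubcentralAux

variable {S : Type*}

theorem idem_inv [InverseMonoid S] {e : S} (he : IsIdempotentElem e) : e⁻¹ = e := by
  have h : e * e = e := he
  exact (InverseMonoid.inv_unique e e (by rw [h, h]) (by rw [h, h])).symm

theorem idem_mul [InverseMonoid S] {e f : S} (he : IsIdempotentElem e)
    (hf : IsIdempotentElem f) : IsIdempotentElem (e * f) := by
  have he' : e * e = e := he
  have hf' : f * f = f := hf
  set x := (e * f)⁻¹ with hx
  have h1 : e * f * x * (e * f) = e * f := InverseMonoid.mul_inv_mul (e * f)
  have h2 : x * (e * f) * x = x := InverseMonoid.inv_mul_inv (e * f)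
  have e1 : ∀ z, e * (e * z) = e * z := fun z => by rw [← mul_assoc, he']
  have f1 : ∀ z, f * (f * z) = f * z := fun z => by rw [← mul_assoc, hf']
  simp only [mul_assoc] at h1 h2
  have h2' : ∀ z, x * (e * (f * (x * z))) = x * z := fun z => by
    have := congrArg (· * z) h2
    simpa only [mul_assoc] using this
  have h3 : f * x * e = x := by
    apply InverseMonoid.inv_unique
    · simp only [mul_assoc, e1, f1, h1]
    · simp only [mul_assoc, e1, f1, h2']
  have hxi : IsIdempotentElem x := by
    have : (f * x * e) * (f * x * e) = f * x * e := by
      simp only [mul_assoc, h2']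
    rwa [h3] at this
  have h4 : e * f = x⁻¹ := InverseMonoid.inv_unique x (e * f)
    (by simpa only [mul_assoc] using h2) (by simpa only [mul_assoc] using h1)
  rw [h4, idem_inv hxi]
  exact hxi

theorem idem_comm [InverseMonoid S] {e f : S} (he : IsIdempotentElem e)
    (hf : IsIdempotentElem f) : e * f = f * e := by
  have he' : e * e = e := he
  have hf' : f * f = f := hf
  have h1 : e * f * (e * f) = e * f := idem_mul he hf
  have h2 : f * e * (f * e) = f * e := idem_mul hf he
  have e1 : ∀ z, e * (e * z) = e * z := fun z => by rw [← mul_assoc, he']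
  have f1 : ∀ z, f * (f * z) = f * z := fun z => by rw [← mul_assoc, hf']
  have h : f * e = (e * f)⁻¹ := by
    apply InverseMonoid.inv_unique
    · simp only [mul_assoc, e1, f1] at h1 ⊢
      exact h1
    · simp only [mul_assoc, e1, f1] at h2 ⊢
      exact h2
  rw [h, idem_inv (idem_mul he hf)]

theorem mem_natconn [Monoid S] {e : S} {g : Sˣ} : g ∈ natconn e ↔ e * (g : S) = e := Iff.rfl

/-- One step of a subcentral series. -/
def Step [Monoid S] (e f : S) : Prop :=
  IsIdempotentElem e ∧ IsIdempotentElem f ∧ CentralIn (upfilter e) f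

theorem comm_inv [Monoid S] {b : S} {g : Sˣ} (h : b * (g : S) = g * b) :
    b * ((g⁻¹ : Sˣ) : S) = ((g⁻¹ : Sˣ) : S) * b := by
  have : Commute b (g : S) := h
  exact this.units_inv_right

theorem step_inf [InverseMonoid S] (hfact : Factorizable S) (hθ : NatconnDualIso S)
    {a b d a' b' : S} (hab : Step a b) (hd : IsIdempotentElem d)
    (ha' : IsIdempotentElem a') (hb' : IsIdempotentElem b')
    (hta : natconn a' = natconn a ⊓ natconn d) (htb : natconn b' = natconn b ⊓ natconn d) :
    Step a' b' := by
  obtain ⟨ha, hb, hmem, hcomm⟩ := hab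
  refine ⟨ha', hb', ?_, ?_⟩
  · refine (hθ.2.1 a' b' ha' hb').2 ?_
    rw [hta, htb]
    exact inf_le_inf_right _ ((hθ.2.1 a b ha hb).1 hmem)
  · rintro s ⟨k, hk, hks⟩
    obtain ⟨h, _, hh, ⟨g, rfl⟩, rfl⟩ := hfact s
    have hp : IsIdempotentElem (k * h) := idem_mul hk hh
    set p := k * h with hpdef
    have hpg : a' = p * g := by rw [hks, hpdef, mul_assoc]
    have hpp : p * p = p := hp
    have h1 : p * a' = a' := by rw [hpg, ← mul_assoc, hpp]
    have h2 : a' * p = p := by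
      have h3 : a' * a' = a' := ha'
      have h4 : a' * p * g = p * g := by rw [mul_assoc, ← hpg, h3]
      exact (Units.mul_left_inj g).1 h4
    have hpa : p = a' := by rw [← h2, idem_comm ha' hp, h1]
    have hg : g ∈ natconn a' := by
      rw [mem_natconn]
      rw [hpa] at hpg
      exact hpg.symm
    rw [hta] at hg
    obtain ⟨hga, hgd⟩ := hg
    have hbg : b * (g : S) = g * b := hcomm g ⟨a, ha, (mem_natconn.1 hga).symm⟩
    have hbg' := comm_inv hbg
    have hbb : b' * b' = b' := hb'
    have hci : IsIdempotentElem ((g : S) * b' * ((g⁻¹ : Sˣ) : S)) := by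
      show _ * _ = _
      simp only [mul_assoc, Units.inv_mul_cancel_left]
      rw [← mul_assoc b' b', hbb]
    have hceq : (g : S) * b' * ((g⁻¹ : Sˣ) : S) = b' := by
      apply hθ.1 _ _ hci hb'
      ext u
      have e1 : u ∈ natconn ((g : S) * b' * ((g⁻¹ : Sˣ) : S)) ↔ g⁻¹ * u * g ∈ natconn b' := by
        simp only [mem_natconn, Units.val_mul]
        rw [← Units.mul_right_inj g (b := b' * _), ← Units.mul_left_inj g⁻¹ (b := (g : S) * (b' * _))]
        simp [mul_assoc]
      rw [e1, htb, Subgroup.mem_inf, Subgroup.mem_inf]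
      refine and_congr ?_ ?_
      · simp only [mem_natconn, Units.val_mul]
        rw [← mul_assoc, ← mul_assoc, hbg', ← Units.mul_right_inj g (c := b), ← hbg]
        simp only [← mul_assoc, Units.mul_inv, one_mul]
        exact Units.mul_left_inj g
      · have hgd : g ∈ natconn d := hgd
        rw [Subgroup.mul_mem_cancel_right _ hgd, Subgroup.mul_mem_cancel_left _ (inv_mem hgd)]
    have hgb : b' * (g : S) = g * b' := by
      conv_lhs => rw [← hceq]
      simp [mul_assoc]
    rw [← mul_assoc, idem_comm hb' hh, mul_assoc, hgb, mul_assoc]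

theorem reach [InverseMonoidWithZero S] (hfact : Factorizable S) (hθ : NatconnDualIso S)
    {e f : S} (he : IsIdempotentElem e) (hf : IsIdempotentElem f)
    (h0 : Relation.ReflTransGen Step 0 f) (hle : NatLe e f) :
    Relation.ReflTransGen Step e f := by
  have key : ∀ x : S, Relation.ReflTransGen Step 0 x → ∀ x' : S, IsIdempotentElem x' →
      natconn x' = natconn x ⊓ natconn e → Relation.ReflTransGen Step e x' := by
    intro x hx
    induction hx with
    | refl =>
      intro x' hx' ht
      have h : natconn (0 : S) = ⊤ := by
        ext u
        simp [mem_natconn, InverseMonoidWithZero.zero_mul]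
      rw [h, top_inf_eq] at ht
      rw [hθ.1 _ _ hx' he ht]
    | @tail a b _ hab ih =>
      intro x' hx' ht
      obtain ⟨a', ha', hta⟩ := (hθ.2.2 a e hab.1 he).2
      exact (ih a' ha' hta).tail (step_inf hfact hθ hab he ha' hx' hta ht)
  exact key f h0 f hf (inf_eq_left.2 ((hθ.2.1 e f he hf).1 hle)).symm

theorem subcentral_reach [InverseMonoidWithZero S] {e : S} (h : IsSubcentralIdem e) :
    IsIdempotentElem e ∧ Relation.ReflTransGen Step 0 e := by
  obtain ⟨n, c, ⟨h0, h1, hi, hc⟩, i, hin, rfl⟩ := h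
  refine ⟨hi i hin, ?_⟩
  induction i with
  | zero => rw [h0]
  | succ i ih =>
    exact (ih (by omega)).tail ⟨hi i (by omega), hi (i + 1) hin, hc i (by omega)⟩

theorem extend [InverseMonoidWithZero S] {n : ℕ} {c : ℕ → S} {a b : S}
    (hc : IsSubcentralSeriesBetween n c a) (h : Relation.ReflTransGen Step a b) :
    ∃ (n' : ℕ) (c' : ℕ → S), IsSubcentralSeriesBetween n' c' b ∧ n ≤ n' ∧
      ∀ i ≤ n, c' i = c i := by
  induction h with
  | refl => exact ⟨n, c, hc, le_rfl, fun _ _ => rfl⟩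
  | @tail x y _ hxy ih =>
    obtain ⟨k, d, ⟨h0, h1, hi, hs⟩, hnk, hd⟩ := ih
    refine ⟨k + 1, fun i => if i ≤ k then d i else y, ⟨by simp [h0], by simp, ?_, ?_⟩,
      by omega, ?_⟩
    · intro i _
      by_cases hik : i ≤ k
      · simp only [hik, if_true]; exact hi i hik
      · simp only [hik, if_false]; exact hxy.2.1
    · intro i hik
      rcases Nat.lt_or_ge i k with h | h
      · have h' : i + 1 ≤ k := h
        simp only [h', h.le, if_true]
        exact hs i h
      · obtain rfl : i = k := by omega
        simp only [le_refl, if_true, Nat.not_succ_le_self, if_false]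
        rw [h1]
        exact hxy.2.2
    · intro i hin
      have : i ≤ k := by omega
      simp only [this, if_true]
      exact hd i hin

end SubcentralAux

/-- In a factorizable inverse monoid with zero whose natural connection is
a dual isomorphism onto a sublattice of the lattice of subgroups of the group of units,
every finite chain `e₀ ≤ e₁ ≤ ⋯ ≤ eₘ` of subcentral idempotents can be refined to a
subcentral idempotent series of `S`. -/
theorem stmt_4 {S : Type*} [InverseMonoidWithZero S] (hfact : Factorizable S)
    (hθ : NatconnDualIso S) (m : ℕ) (f : ℕ → S)
    (hsc : ∀ i ≤ m, IsSubcentralIdem (f i))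
    (hchain : ∀ i < m, NatLe (f i) (f (i + 1))) :
    ∃ (n : ℕ) (c : ℕ → S), IsSubcentralSeries n c ∧ ∀ i ≤ m, ∃ j ≤ n, c j = f i := by
  obtain ⟨n, c, hc, hmem⟩ : ∃ (n : ℕ) (c : ℕ → S), IsSubcentralSeriesBetween n c (f m) ∧
      ∀ i ≤ m, ∃ j ≤ n, c j = f i := by
    induction m with
    | zero =>
      obtain ⟨_, h⟩ := SubcentralAux.subcentral_reach (hsc 0 le_rfl)
      have hz : IsSubcentralSeriesBetween 0 (fun _ => (0 : S)) 0 :=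
        ⟨rfl, rfl, fun _ _ => InverseMonoidWithZero.zero_mul 0, fun _ h => by omega⟩
      obtain ⟨n, c, hc, _, _⟩ := SubcentralAux.extend hz h
      refine ⟨n, c, hc, fun i hi => ⟨n, le_rfl, ?_⟩⟩
      obtain rfl : i = 0 := by omega
      exact hc.2.1
    | succ m ih =>
      obtain ⟨n, c, hc, hmem⟩ := ih (fun i hi => hsc i (by omega)) (fun i hi => hchain i (by omega))
      obtain ⟨he, _⟩ := SubcentralAux.subcentral_reach (hsc m (by omega))
      obtain ⟨hf, h⟩ := SubcentralAux.subcentral_reach (hsc (m + 1) le_rfl)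
      obtain ⟨n', c', hc', hn, hcc⟩ := SubcentralAux.extend hc
        (SubcentralAux.reach hfact hθ he hf h (hchain m (by omega)))
      refine ⟨n', c', hc', fun i hi => ?_⟩
      rcases Nat.lt_or_ge m i with h | h
      · obtain rfl : i = m + 1 := by omega
        exact ⟨n', le_rfl, hc'.2.1⟩
      · obtain ⟨j, hj, hji⟩ := hmem i h
        exact ⟨j, by omega, by rw [hcc j hj, hji]⟩
  obtain ⟨he, _⟩ := SubcentralAux.subcentral_reach (hsc m le_rfl)
  have h1 : IsSubcentralIdem (1 : S) := by
    obtain ⟨k, d, hd, _⟩ := hsc m le_rfl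
    exact ⟨k, d, hd, k, le_rfl, hd.2.1⟩
  obtain ⟨hf, h⟩ := SubcentralAux.subcentral_reach h1
  obtain ⟨n', c', hc', hn, hcc⟩ := SubcentralAux.extend hc
    (SubcentralAux.reach hfact hθ he hf h ⟨f m, he, (mul_one _).symm⟩)
  refine ⟨n', c', hc', fun i hi => ?_⟩
  obtain ⟨j, hj, hji⟩ := hmem i hi
  exact ⟨j, by omega, by rw [hcc j hj, hji]⟩
end

section
/- Let S be a factorizable inverse monoid with semilattice of idempotents E and group of units G such that the natural connection θ is a dual isomorphism from E onto a sublattice of L(G). If e₁, e, f₁, f are idempotents of S such that e₁ is central in e↑ and f₁ is central in f↑ (and the relevant joins exist), then e₁(e∨f₁) is central in (e₁(e∨f))↑, f₁(e₁∨f) is central in (f₁(e∨f))↑, and the monoids F_{e₁(e∨f), e₁(e∨f₁)} and F_{f₁(e∨f), f₁(e₁∨f)} are isomorphic. -/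
section Helpers
variable {S : Type*} [InverseMonoid S]

lemma zidem_inv {e : S} (he : IsIdempotentElem e) : e⁻¹ = e := by
  have h : e * e = e := he
  exact (InverseMonoid.inv_unique e e (by rw [h, h]) (by rw [h, h])).symm

lemma zidem_mul {e f : S} (he : IsIdempotentElem e) (hf : IsIdempotentElem f) :
    IsIdempotentElem (e * f) := by
  have he' : e * e = e := he
  have hf' : f * f = f := hf
  have h1 := InverseMonoid.mul_inv_mul (e * f)
  have h2 := InverseMonoid.inv_mul_inv (e * f)
  set x := (e * f)⁻¹ with hx
  have hy : IsIdempotentElem (f * x * e) := by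
    show f * x * e * (f * x * e) = f * x * e
    calc f * x * e * (f * x * e) = f * (x * (e * f) * x) * e := by simp only [mul_assoc]
      _ = _ := by rw [h2]
  have h3 : e * f = (f * x * e)⁻¹ := by
    apply InverseMonoid.inv_unique
    · calc f * x * e * (e * f) * (f * x * e)
          = f * x * (e * e) * (f * f) * x * e := by simp only [mul_assoc]
        _ = f * (x * (e * f) * x) * e := by rw [he', hf']; simp only [mul_assoc]
        _ = _ := by rw [h2]
    · calc e * f * (f * x * e) * (e * f)
          = e * (f * f) * x * (e * e) * f := by simp only [mul_assoc]
        _ = e * f * x * (e * f) := by rw [he', hf']; simp only [mul_assoc]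
        _ = _ := h1
  rw [zidem_inv hy] at h3
  rw [h3]; exact hy

lemma zidem_comm {e f : S} (he : IsIdempotentElem e) (hf : IsIdempotentElem f) :
    e * f = f * e := by
  have he' : e * e = e := he
  have hf' : f * f = f := hf
  have h1 : e * f * (e * f) = e * f := zidem_mul he hf
  have h2 : f * e * (f * e) = f * e := zidem_mul hf he
  have h3 : f * e = (e * f)⁻¹ := by
    apply InverseMonoid.inv_unique
    · calc e * f * (f * e) * (e * f) = e * (f * f) * (e * e) * f := by simp only [mul_assoc]
        _ = e * f * (e * f) := by rw [he', hf']; simp only [mul_assoc]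
        _ = _ := h1
    · calc f * e * (e * f) * (f * e) = f * (e * e) * (f * f) * e := by simp only [mul_assoc]
        _ = f * e * (f * e) := by rw [he', hf']; simp only [mul_assoc]
        _ = _ := h2
  rw [h3, zidem_inv (zidem_mul he hf)]

lemma zle_iff {e f : S} (he : IsIdempotentElem e) (hf : IsIdempotentElem f) :
    NatLe e f ↔ e * f = e := by
  have hf' : f * f = f := hf
  constructor
  · rintro ⟨x, hx, h⟩
    rw [h, mul_assoc, hf']
  · intro h; exact ⟨e, he, h.symm⟩

lemma zmem_natconn {e : S} {g : Sˣ} : g ∈ natconn e ↔ e * (g : S) = e := Iff.rfl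

lemma zmem_natconn_left {e : S} (he : IsIdempotentElem e) {g : Sˣ} (hg : g ∈ natconn e) :
    (g : S) * e = e := by
  have he' : e * e = e := he
  have h1 : e * (g : S) = e := hg
  have h2 : e * ((g⁻¹ : Sˣ) : S) = e := (natconn e).inv_mem hg
  have h3 : (g : S) * e = e⁻¹ := by
    apply InverseMonoid.inv_unique
    · rw [← mul_assoc, h1, he', he']
    · calc (g : S) * e * e * (g * e) = g * (e * e) * g * e := by simp only [mul_assoc]
        _ = g * (e * g) * e := by rw [he']; simp only [mul_assoc]
        _ = g * e := by rw [h1, mul_assoc, he']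
  rw [h3, zidem_inv he]

/-- two idempotents differing by a unit are equal -/
lemma zeq_of_unit {x y : S} (hx : IsIdempotentElem x) (hy : IsIdempotentElem y) {u : Sˣ}
    (h : x = y * (u : S)) : x = y ∧ u ∈ natconn y := by
  have hx' : x * x = x := hx
  have hy' : y * y = y := hy
  have h1 : y * x = x := by rw [h, ← mul_assoc, hy']
  have h2 : y = x * ((u⁻¹ : Sˣ) : S) := by rw [h]; simp
  have h3 : x * y = y := by rw [h2, ← mul_assoc, hx']
  have h4 : x = y := by rw [← h1, zidem_comm hy hx, h3]
  exact ⟨h4, by rw [zmem_natconn, ← h, h4]⟩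

lemma zup {p s : S} (hfact : Factorizable S) (hp : IsIdempotentElem p) (hs : s ∈ upfilter p) :
    ∃ (h : S) (g : Sˣ), IsIdempotentElem h ∧ p * h = p ∧ g ∈ natconn p ∧ s = h * g := by
  obtain ⟨x, hx, hps⟩ := hs
  obtain ⟨h, g, hh, ⟨u, rfl⟩, rfl⟩ := hfact s
  rw [← mul_assoc] at hps
  obtain ⟨h1, h2⟩ := zeq_of_unit hp (zidem_mul hx hh) hps
  refine ⟨h, u, hh, ?_, ?_, rfl⟩
  · have hh' : h * h = h := hh
    rw [h1, mul_assoc, hh']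
  · rw [h1]; exact h2

lemma zup_mem {p h : S} {g : Sˣ} (hp : IsIdempotentElem p) (hh : p * h = p)
    (hg : g ∈ natconn p) : h * (g : S) ∈ upfilter p :=
  ⟨p, hp, by rw [← mul_assoc, hh, hg]⟩

lemma zcentral {p q : S} (hfact : Factorizable S) (hp : IsIdempotentElem p)
    (hq : IsIdempotentElem q) (hpq : p * q = p)
    (hc : ∀ g ∈ natconn p, q * (g : S) = g * q) : CentralIn (upfilter p) q := by
  refine ⟨⟨p, hp, hpq.symm⟩, ?_⟩
  intro s hs
  obtain ⟨h, g, hh, hph, hg, rfl⟩ := zup hfact hp hs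
  rw [← mul_assoc, zidem_comm hq hh, mul_assoc, hc g hg, mul_assoc]

lemma zFef_iff {p q x : S} (hfact : Factorizable S) (hp : IsIdempotentElem p)
    (hq : IsIdempotentElem q) (hpq : p * q = p) :
    x ∈ Fef p q ↔ ∃ (m : S) (g : Sˣ), IsIdempotentElem m ∧ p * m = p ∧ q * m = m ∧
      g ∈ natconn p ∧ x = m * g := by
  have hq' : q * q = q := hq
  constructor
  · rintro ⟨s, hs, rfl⟩
    obtain ⟨h, g, hh, hph, hg, rfl⟩ := zup hfact hp hs
    exact ⟨q * h, g, zidem_mul hq hh, by rw [← mul_assoc, hpq, hph],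
      by rw [← mul_assoc, hq'], hg, (mul_assoc _ _ _).symm⟩
  · rintro ⟨m, g, hm, hpm, hqm, hg, rfl⟩
    exact ⟨m * g, zup_mem hp hpm hg, by show q * (m * g) = _; rw [← mul_assoc, hqm]⟩

lemma znatconn_mono {e f : S} (he : IsIdempotentElem e) (hf : IsIdempotentElem f)
    (h : e * f = e) : natconn f ≤ natconn e := by
  intro g hg
  have hg' : f * (g : S) = f := hg
  show e * (g : S) = e
  rw [← h, mul_assoc, hg']

lemma znatconn_mul (hθ : NatconnDualIso S) {e f : S} (he : IsIdempotentElem e)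
    (hf : IsIdempotentElem f) : natconn (e * f) = natconn e ⊔ natconn f := by
  have he' : e * e = e := he
  have hf' : f * f = f := hf
  have hef := zidem_mul he hf
  obtain ⟨-, hle, hl⟩ := hθ
  obtain ⟨h, hh, hhe⟩ := (hl e f he hf).1
  apply le_antisymm
  · rw [← hhe]
    have h1 := (zle_iff hh he).1 ((hle h e hh he).2 (by rw [hhe]; exact le_sup_left))
    have h2 := (zle_iff hh hf).1 ((hle h f hh hf).2 (by rw [hhe]; exact le_sup_right))
    exact znatconn_mono hh hef (by rw [← mul_assoc, h1, h2])
  · refine sup_le (znatconn_mono hef he ?_) (znatconn_mono hef hf ?_)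
    · rw [zidem_comm hef he, ← mul_assoc, he']
    · rw [mul_assoc, hf']

lemma zjoin_idem {e f j : S} (he : IsIdempotentElem e) (hf : IsIdempotentElem f)
    (hj : IsNatJoin e f j) : IsIdempotentElem j := by
  obtain ⟨x, hx, h⟩ := hj.2.2 1 ⟨e, he, (mul_one _).symm⟩ ⟨f, hf, (mul_one _).symm⟩
  rw [h, mul_one]; exact hx

lemma znatconn_join (hθ : NatconnDualIso S) {e f j : S} (he : IsIdempotentElem e)
    (hf : IsIdempotentElem f) (hj : IsNatJoin e f j) : natconn j = natconn e ⊓ natconn f := by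
  have hji := zjoin_idem he hf hj
  obtain ⟨-, hle, hl⟩ := hθ
  obtain ⟨h, hh, hhe⟩ := (hl e f he hf).2
  apply le_antisymm
  · exact le_inf ((hle _ _ he hji).1 hj.1) ((hle _ _ hf hji).1 hj.2.1)
  · rw [← hhe]
    exact (hle _ _ hji hh).1 (hj.2.2 h ((hle _ _ he hh).2 (hhe ▸ inf_le_left))
      ((hle _ _ hf hh).2 (hhe ▸ inf_le_right)))

lemma zconj_idem {j : S} (hj : IsIdempotentElem j) (u : Sˣ) :
    IsIdempotentElem ((u : S) * j * ((u⁻¹ : Sˣ) : S)) := by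
  have hj' : j * j = j := hj
  show (u : S) * j * ((u⁻¹ : Sˣ) : S) * ((u : S) * j * ((u⁻¹ : Sˣ) : S)) = _
  calc (u : S) * j * ((u⁻¹ : Sˣ) : S) * ((u : S) * j * ((u⁻¹ : Sˣ) : S))
      = u * j * (((u⁻¹ : Sˣ) : S) * u) * j * ((u⁻¹ : Sˣ) : S) := by simp only [mul_assoc]
    _ = u * (j * j) * ((u⁻¹ : Sˣ) : S) := by rw [Units.inv_mul]; simp only [mul_assoc, one_mul]
    _ = _ := by rw [hj']

lemma zjoin_le_conj {e f j : S} (he : IsIdempotentElem e) (hf : IsIdempotentElem f)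
    (hj : IsNatJoin e f j) (u : Sˣ) (hue : e * (u : S) = u * e) (huf : f * (u : S) = u * f) :
    j * ((u : S) * j * ((u⁻¹ : Sˣ) : S)) = j := by
  have hji := zjoin_idem he hf hj
  have hc := zconj_idem hji u
  have key : ∀ e : S, IsIdempotentElem e → NatLe e j → e * (u : S) = u * e →
      NatLe e ((u : S) * j * ((u⁻¹ : Sˣ) : S)) := by
    intro e he hej hu
    rw [zle_iff he hc]
    rw [zle_iff he hji] at hej
    calc e * ((u : S) * j * ((u⁻¹ : Sˣ) : S)) = e * u * j * ((u⁻¹ : Sˣ) : S) := by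
          simp only [mul_assoc]
      _ = u * (e * j) * ((u⁻¹ : Sˣ) : S) := by rw [hu]; simp only [mul_assoc]
      _ = e := by rw [hej, ← hu, mul_assoc, Units.mul_inv, mul_one]
  exact (zle_iff hji hc).1 (hj.2.2 _ (key e he hj.1 hue) (key f hf hj.2.1 huf))

lemma zcomm_inv {e : S} {u : Sˣ} (h : e * (u : S) = u * e) :
    e * ((u⁻¹ : Sˣ) : S) = ((u⁻¹ : Sˣ) : S) * e := by
  have h' : Commute e (u : S) := h
  exact h'.units_inv_right

lemma zjoin_comm {e f j : S} (he : IsIdempotentElem e) (hf : IsIdempotentElem f)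
    (hj : IsNatJoin e f j) (u : Sˣ) (hue : e * (u : S) = u * e) (huf : f * (u : S) = u * f) :
    j * (u : S) = u * j := by
  have hji := zjoin_idem he hf hj
  have h1 := zjoin_le_conj he hf hj u hue huf
  have h2 := zjoin_le_conj he hf hj u⁻¹ (zcomm_inv hue) (zcomm_inv huf)
  rw [inv_inv] at h2
  have h3 : (u : S) * j * ((u⁻¹ : Sˣ) : S) * j = u * j * ((u⁻¹ : Sˣ) : S) := by
    calc (u : S) * j * ((u⁻¹ : Sˣ) : S) * j
        = u * (j * (((u⁻¹ : Sˣ) : S) * j * u)) * ((u⁻¹ : Sˣ) : S) := by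
          simp only [mul_assoc, Units.mul_inv, mul_one]
      _ = _ := by rw [h2]
  rw [← zidem_comm hji (zconj_idem hji u), h1] at h3
  nth_rewrite 1 [h3]
  rw [mul_assoc, Units.inv_mul, mul_one]

lemma zcentral_unit {e e₁ : S} (he : IsIdempotentElem e) (hce : CentralIn (upfilter e) e₁)
    {g : Sˣ} (hg : g ∈ natconn e) : e₁ * (g : S) = g * e₁ :=
  hce.2 _ ⟨e, he, Eq.symm hg⟩

lemma zsup_decomp {G : Type*} [Group G] {A D : Subgroup G}
    (hn : ∀ d ∈ D, ∀ a ∈ A, d * a * d⁻¹ ∈ A) {x : G} (hx : x ∈ A ⊔ D) :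
    ∃ a ∈ A, ∃ d ∈ D, x = a * d := by
  let K : Subgroup G :=
    { carrier := {x | ∃ a ∈ A, ∃ d ∈ D, x = a * d}
      one_mem' := ⟨1, A.one_mem, 1, D.one_mem, by simp⟩
      mul_mem' := by
        rintro _ _ ⟨a, ha, d, hd, rfl⟩ ⟨b, hb, c, hc, rfl⟩
        exact ⟨a * (d * b * d⁻¹), A.mul_mem ha (hn d hd b hb), d * c, D.mul_mem hd hc, by group⟩
      inv_mem' := by
        rintro _ ⟨a, ha, d, hd, rfl⟩
        refine ⟨d⁻¹ * a⁻¹ * d⁻¹⁻¹, hn _ (D.inv_mem hd) _ (A.inv_mem ha), d⁻¹, D.inv_mem hd, ?_⟩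
        group }
  have h1 : A ≤ K := fun a ha => ⟨a, ha, 1, D.one_mem, by simp⟩
  have h2 : D ≤ K := fun d hd => ⟨1, A.one_mem, d, hd, by simp⟩
  exact sup_le h1 h2 hx

lemma znormal {e₁ : S} {d a : Sˣ} (hd : e₁ * (d : S) = d * e₁) (ha : a ∈ natconn e₁) :
    d * a * d⁻¹ ∈ natconn e₁ := by
  have ha' : e₁ * (a : S) = e₁ := ha
  show e₁ * ((d * a * d⁻¹ : Sˣ) : S) = e₁
  rw [Units.val_mul, Units.val_mul, ← mul_assoc, ← mul_assoc, hd, mul_assoc (d : S), ha', ← hd,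
    mul_assoc, Units.mul_inv, mul_one]

/-- elements commuting with units in a sup -/
lemma zcomm_sup {x : S} {A D : Subgroup Sˣ} (hA : ∀ g ∈ A, x * (g : S) = g * x)
    (hD : ∀ g ∈ D, x * (g : S) = g * x) : ∀ g ∈ A ⊔ D, x * (g : S) = g * x := by
  let K : Subgroup Sˣ :=
    { carrier := {g | Commute x (g : S)}
      one_mem' := by simp
      mul_mem' := by
        intro a b ha hb
        have ha' : Commute x (a : S) := ha
        have hb' : Commute x (b : S) := hb
        show Commute x ((a * b : Sˣ) : S)
        rw [Units.val_mul]; exact ha'.mul_right hb'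
      inv_mem' := by
        intro a ha
        exact zcomm_inv ha }
  have h1 : A ≤ K := hA
  have h2 : D ≤ K := hD
  intro g hg
  exact sup_le h1 h2 hg

lemma zmain (hfact : Factorizable S) (hθ : NatconnDualIso S) {e₁ j n : S}
    (he₁ : IsIdempotentElem e₁) (hj : IsIdempotentElem j) (hn : IsIdempotentElem n)
    (hjn : j * n = j) (hc : ∀ g ∈ natconn j, e₁ * (g : S) = g * e₁)
    (hinf : natconn j ⊓ natconn e₁ ≤ natconn n) :
    Set.BijOn (fun x => e₁ * x) (Fef j n) (Fef (e₁ * j) (e₁ * n)) ∧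
    ∀ a ∈ Fef j n, ∀ b ∈ Fef j n, e₁ * (a * b) = e₁ * a * (e₁ * b) := by
  have hp := zidem_mul he₁ hj
  have hq := zidem_mul he₁ hn
  have he₁' : e₁ * e₁ = e₁ := he₁
  have hpq : e₁ * j * (e₁ * n) = e₁ * j := by
    calc e₁ * j * (e₁ * n) = e₁ * (j * e₁) * n := by simp only [mul_assoc]
      _ = e₁ * e₁ * (j * n) := by rw [zidem_comm hj he₁]; simp only [mul_assoc]
      _ = _ := by rw [he₁', hjn]
  have hdec : ∀ {x : Sˣ}, x ∈ natconn (e₁ * j) →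
      ∃ a ∈ natconn e₁, ∃ d ∈ natconn j, x = a * d := by
    intro x hx
    rw [znatconn_mul hθ he₁ hj] at hx
    exact zsup_decomp (fun d hd a ha => znormal (hc d hd) ha) hx
  -- key intersection fact
  have hkey : ∀ m : S, IsIdempotentElem m → j * m = j → n * m = m →
      natconn (e₁ * m) ⊓ natconn j = natconn m := by
    intro m hm hjm hnm
    have hmj := znatconn_mono hj hm hjm
    have hmn := znatconn_mono hm hn (by rw [zidem_comm hm hn, hnm])
    rw [znatconn_mul hθ he₁ hm]
    apply le_antisymm
    · rintro x ⟨hx, hxj⟩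
      obtain ⟨a, ha, d, hd, rfl⟩ :=
        zsup_decomp (fun d hd a ha => znormal (hc d (hmj hd)) ha) hx
      have haj : a ∈ natconn j := (Subgroup.mul_mem_cancel_right _ (hmj hd)).1 hxj
      exact (natconn m).mul_mem (hmn (hinf ⟨haj, ha⟩)) hd
    · exact le_inf le_sup_right hmj
  refine ⟨⟨?_, ?_, ?_⟩, ?_⟩
  · intro x hx
    obtain ⟨m, g, hm, hjm, hnm, hg, rfl⟩ := (zFef_iff hfact hj hn hjn).1 hx
    rw [zFef_iff hfact hp hq hpq]
    refine ⟨e₁ * m, g, zidem_mul he₁ hm, ?_, ?_, ?_, (mul_assoc _ _ _).symm⟩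
    · calc e₁ * j * (e₁ * m) = e₁ * (j * e₁) * m := by simp only [mul_assoc]
        _ = e₁ * e₁ * (j * m) := by rw [zidem_comm hj he₁]; simp only [mul_assoc]
        _ = _ := by rw [he₁', hjm]
    · calc e₁ * n * (e₁ * m) = e₁ * (n * e₁) * m := by simp only [mul_assoc]
        _ = e₁ * e₁ * (n * m) := by rw [zidem_comm hn he₁]; simp only [mul_assoc]
        _ = _ := by rw [he₁', hnm]
    · rw [znatconn_mul hθ he₁ hj]
      exact (le_sup_right : natconn j ≤ _) hg
  · intro x hx y hy hxy
    obtain ⟨m, g, hm, hjm, hnm, hg, rfl⟩ := (zFef_iff hfact hj hn hjn).1 hx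
    obtain ⟨m', g', hm', hjm', hnm', hg', rfl⟩ := (zFef_iff hfact hj hn hjn).1 hy
    have hxy' : e₁ * (m * (g : S)) = e₁ * (m' * (g' : S)) := hxy
    have h1 : e₁ * m = e₁ * m' * ((g' * g⁻¹ : Sˣ) : S) := by
      calc e₁ * m = e₁ * (m * g) * ((g⁻¹ : Sˣ) : S) := by
            simp only [mul_assoc, Units.mul_inv, mul_one]
        _ = _ := by rw [hxy', Units.val_mul]; simp only [mul_assoc]
    obtain ⟨h2, h3⟩ := zeq_of_unit (zidem_mul he₁ hm) (zidem_mul he₁ hm') h1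
    have h4 : m = m' := by
      apply hθ.1 m m' hm hm'
      rw [← hkey m hm hjm hnm, ← hkey m' hm' hjm' hnm', h2]
    have h5 : g' * g⁻¹ ∈ natconn m' := by
      rw [← hkey m' hm' hjm' hnm']
      exact ⟨h3, (natconn j).mul_mem hg' ((natconn j).inv_mem hg)⟩
    have h6 : m' * ((g' * g⁻¹ : Sˣ) : S) = m' := h5
    show m * (g : S) = m' * (g' : S)
    rw [h4]
    nth_rewrite 1 [← h6]
    rw [mul_assoc, ← Units.val_mul]
    simp
  · intro x hx
    obtain ⟨h, g, hh, hph, hqh, hg, rfl⟩ := (zFef_iff hfact hp hq hpq).1 hx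
    obtain ⟨a, ha, d, hd, rfl⟩ := hdec hg
    have heh : h * e₁ = h := by
      rw [zidem_comm hh he₁, ← hqh, ← mul_assoc, ← mul_assoc, he₁']
    have hAh := znatconn_mono hh he₁ heh
    obtain ⟨m, hm, hmc⟩ := ((hθ.2.2 h j hh hj).2)
    have hem : e₁ * m = h := by
      apply hθ.1 _ _ (zidem_mul he₁ hm) hh
      rw [znatconn_mul hθ he₁ hm, hmc]
      apply le_antisymm (sup_le hAh inf_le_left)
      intro x hx
      obtain ⟨b, hb, c, hcj, rfl⟩ := hdec (znatconn_mono hp hh hph hx)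
      have hch : c ∈ natconn h := (Subgroup.mul_mem_cancel_left _ (hAh hb)).1 hx
      exact Subgroup.mul_mem_sup hb ⟨hch, hcj⟩
    have hjm : j * m = j :=
      (zle_iff hj hm).1 ((hθ.2.1 j m hj hm).2 (hmc ▸ inf_le_right))
    have hmn : m * n = m := by
      refine (zle_iff hm hn).1 ((hθ.2.1 m n hm hn).2 ?_)
      rw [hmc]
      refine le_inf ?_ (znatconn_mono hj hn hjn)
      refine le_trans ?_ (znatconn_mono hh hq (by rw [zidem_comm hh hq, hqh]))
      rw [znatconn_mul hθ he₁ hn]; exact le_sup_right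
    refine ⟨m * (d : S), (zFef_iff hfact hj hn hjn).2
      ⟨m, d, hm, hjm, by rw [zidem_comm hn hm, hmn], hd, rfl⟩, ?_⟩
    have hha : h * (a : S) = h := hAh ha
    show e₁ * (m * (d : S)) = h * ((a * d : Sˣ) : S)
    rw [← mul_assoc, hem, Units.val_mul, ← mul_assoc, hha]
  · intro x hx y hy
    obtain ⟨m, g, hm, hjm, hnm, hg, rfl⟩ := (zFef_iff hfact hj hn hjn).1 hx
    calc e₁ * (m * g * y) = e₁ * e₁ * (m * g * y) := by rw [he₁']
      _ = e₁ * (e₁ * m) * g * y := by simp only [mul_assoc]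
      _ = e₁ * (m * e₁) * g * y := by rw [zidem_comm he₁ hm]
      _ = e₁ * m * (e₁ * g) * y := by simp only [mul_assoc]
      _ = _ := by rw [hc g hg]; simp only [mul_assoc]

lemma zFef_mul (hfact : Factorizable S) {p q : S} (hp : IsIdempotentElem p)
    (hq : IsIdempotentElem q) (hpq : p * q = p) (hc : ∀ g ∈ natconn p, q * (g : S) = g * q)
    {x y : S} (hx : x ∈ Fef p q) (hy : y ∈ Fef p q) : x * y ∈ Fef p q := by
  have hp' : p * p = p := hp
  have hq' : q * q = q := hq
  obtain ⟨s, hs, rfl⟩ := hx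
  obtain ⟨t, ht, rfl⟩ := hy
  have hcs := (zcentral hfact hp hq hpq hc).2 s hs
  obtain ⟨h, g, hh, hph, hg, rfl⟩ := zup hfact hp hs
  obtain ⟨k, u, hk, hpk, hu, rfl⟩ := zup hfact hp ht
  refine ⟨h * g * (k * u), ⟨p, hp, ?_⟩, ?_⟩
  · have hg' : p * (g : S) = p := hg
    have hu' : p * (u : S) = p := hu
    simp only [← mul_assoc]
    rw [hph, hg', hpk, hu']
  · show q * (h * g * (k * u)) = q * (h * g) * (q * (k * u))
    rw [hcs, mul_assoc (h * (g : S)), ← mul_assoc q q, hq', ← mul_assoc, hcs, mul_assoc]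

lemma zSubIso {A B C : Set S} {φ ψ : S → S} (hA : ∀ x ∈ A, ∀ y ∈ A, x * y ∈ A)
    (h1 : Set.BijOn φ A B) (h2 : ∀ a ∈ A, ∀ b ∈ A, φ (a * b) = φ a * φ b)
    (h3 : Set.BijOn ψ A C) (h4 : ∀ a ∈ A, ∀ b ∈ A, ψ (a * b) = ψ a * ψ b) : SubIso B C := by
  have hinv : Set.InvOn (Function.invFunOn φ A) φ A B := h1.invOn_invFunOn
  have hb : Set.BijOn (Function.invFunOn φ A) B A := h1.symm hinv.symm
  refine ⟨ψ ∘ Function.invFunOn φ A, h3.comp hb, ?_⟩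
  intro a ha b hb'
  obtain ⟨x, hx, rfl⟩ := h1.surjOn ha
  obtain ⟨y, hy, rfl⟩ := h1.surjOn hb'
  simp only [Function.comp]
  rw [← h2 x hx y hy, hinv.1 hx, hinv.1 hy, hinv.1 (hA x hx y hy), h4 x hx y hy]

lemma zcentral_part (hfact : Factorizable S) (hθ : NatconnDualIso S) {e₁ j j₁ : S}
    (he₁ : IsIdempotentElem e₁) (hj : IsIdempotentElem j) (hj₁ : IsIdempotentElem j₁)
    (hjj : j * j₁ = j)
    (hc : ∀ g ∈ natconn j, e₁ * (g : S) = g * e₁)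
    (hc₁ : ∀ g ∈ natconn j, j₁ * (g : S) = g * j₁) :
    CentralIn (upfilter (e₁ * j)) (e₁ * j₁) := by
  have he₁' : e₁ * e₁ = e₁ := he₁
  apply zcentral hfact (zidem_mul he₁ hj) (zidem_mul he₁ hj₁)
  · calc e₁ * j * (e₁ * j₁) = e₁ * (j * e₁) * j₁ := by simp only [mul_assoc]
      _ = e₁ * e₁ * (j * j₁) := by rw [zidem_comm hj he₁]; simp only [mul_assoc]
      _ = _ := by rw [he₁', hjj]
  · rw [znatconn_mul hθ he₁ hj]
    apply zcomm_sup
    · intro g hg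
      have h1 : e₁ * (g : S) = e₁ := hg
      rw [← mul_assoc, zmem_natconn_left he₁ hg, zidem_comm he₁ hj₁, mul_assoc, h1]
    · intro g hg
      rw [mul_assoc, hc₁ g hg, ← mul_assoc, hc g hg, mul_assoc]

end Helpers

/-- In a factorizable inverse monoid whose natural connection is a dual
isomorphism onto a sublattice of the lattice of subgroups of the group of units:
if `e₁` is central in `e↑`, `f₁` is central in `f↑`, and the joins `e ∨ f`, `e ∨ f₁`,
`e₁ ∨ f` exist, then `e₁(e∨f₁)` is central in `(e₁(e∨f))↑`, `f₁(e₁∨f)` is central in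
`(f₁(e∨f))↑`, and `F_{e₁(e∨f), e₁(e∨f₁)} ≅ F_{f₁(e∨f), f₁(e₁∨f)}`. -/
theorem stmt_7 {S : Type*} [InverseMonoid S] (hfact : Factorizable S)
    (hθ : NatconnDualIso S) (e₁ e f₁ f j j₁ j₂ : S)
    (he₁ : IsIdempotentElem e₁) (he : IsIdempotentElem e)
    (hf₁ : IsIdempotentElem f₁) (hf : IsIdempotentElem f)
    (hce : CentralIn (upfilter e) e₁) (hcf : CentralIn (upfilter f) f₁)
    (hj : IsNatJoin e f j) (hj₁ : IsNatJoin e f₁ j₁) (hj₂ : IsNatJoin e₁ f j₂) :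
    CentralIn (upfilter (e₁ * j)) (e₁ * j₁) ∧
    CentralIn (upfilter (f₁ * j)) (f₁ * j₂) ∧
    SubIso (Fef (e₁ * j) (e₁ * j₁)) (Fef (f₁ * j) (f₁ * j₂)) := by
  have hji := zjoin_idem he hf hj
  have hj₁i := zjoin_idem he hf₁ hj₁
  have hj₂i := zjoin_idem he₁ hf hj₂
  have hn := zidem_mul hj₁i hj₂i
  have hD := znatconn_join hθ he hf hj
  have hD₁ := znatconn_join hθ he hf₁ hj₁
  have hD₂ := znatconn_join hθ he₁ hf hj₂
  have hAA : natconn e₁ ≤ natconn e := (hθ.2.1 _ _ he he₁).1 hce.1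
  have hBB : natconn f₁ ≤ natconn f := (hθ.2.1 _ _ hf hf₁).1 hcf.1
  have hjj₁ : j * j₁ = j := (zle_iff hji hj₁i).1 ((hθ.2.1 _ _ hji hj₁i).2 (by
    rw [hD, hD₁]; exact inf_le_inf_left _ hBB))
  have hjj₂ : j * j₂ = j := (zle_iff hji hj₂i).1 ((hθ.2.1 _ _ hji hj₂i).2 (by
    rw [hD, hD₂]; exact inf_le_inf_right _ hAA))
  have hjn : j * (j₁ * j₂) = j := by rw [← mul_assoc, hjj₁, hjj₂]
  have hdA : ∀ g ∈ natconn j, g ∈ natconn e := fun g hg => by rw [hD] at hg; exact hg.1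
  have hdB : ∀ g ∈ natconn j, g ∈ natconn f := fun g hg => by rw [hD] at hg; exact hg.2
  have ce : ∀ g ∈ natconn j, e * (g : S) = g * e := fun g hg => by
    rw [zmem_natconn_left he (hdA g hg)]; exact hdA g hg
  have cf : ∀ g ∈ natconn j, f * (g : S) = g * f := fun g hg => by
    rw [zmem_natconn_left hf (hdB g hg)]; exact hdB g hg
  have ce₁ : ∀ g ∈ natconn j, e₁ * (g : S) = g * e₁ := fun g hg =>
    zcentral_unit he hce (hdA g hg)
  have cf₁ : ∀ g ∈ natconn j, f₁ * (g : S) = g * f₁ := fun g hg =>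
    zcentral_unit hf hcf (hdB g hg)
  have cj₁ : ∀ g ∈ natconn j, j₁ * (g : S) = g * j₁ := fun g hg =>
    zjoin_comm he hf₁ hj₁ g (ce g hg) (cf₁ g hg)
  have cj₂ : ∀ g ∈ natconn j, j₂ * (g : S) = g * j₂ := fun g hg =>
    zjoin_comm he₁ hf hj₂ g (ce₁ g hg) (cf g hg)
  have cn : ∀ g ∈ natconn j, j₁ * j₂ * (g : S) = g * (j₁ * j₂) := fun g hg => by
    rw [mul_assoc, cj₂ g hg, ← mul_assoc, cj₁ g hg, mul_assoc]
  have hNe : natconn j ⊓ natconn e₁ ≤ natconn (j₁ * j₂) := by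
    rw [znatconn_mul hθ hj₁i hj₂i, hD, hD₂]
    exact le_sup_of_le_right (le_inf inf_le_right (inf_le_left.trans inf_le_right))
  have hNf : natconn j ⊓ natconn f₁ ≤ natconn (j₁ * j₂) := by
    rw [znatconn_mul hθ hj₁i hj₂i, hD, hD₁]
    exact le_sup_of_le_left (le_inf (inf_le_left.trans inf_le_left) inf_le_right)
  have hE : e₁ * (j₁ * j₂) = e₁ * j₁ := by
    rw [zidem_comm hj₁i hj₂i, ← mul_assoc, (zle_iff he₁ hj₂i).1 hj₂.1]
  have hF : f₁ * (j₁ * j₂) = f₁ * j₂ := by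
    rw [← mul_assoc, (zle_iff hf₁ hj₁i).1 hj₁.2.1]
  refine ⟨zcentral_part hfact hθ he₁ hji hj₁i hjj₁ ce₁ cj₁,
    zcentral_part hfact hθ hf₁ hji hj₂i hjj₂ cf₁ cj₂, ?_⟩
  obtain ⟨a1, a2⟩ := zmain hfact hθ he₁ hji hn hjn ce₁ hNe
  obtain ⟨b1, b2⟩ := zmain hfact hθ hf₁ hji hn hjn cf₁ hNf
  rw [hE] at a1
  rw [hF] at b1
  exact zSubIso (fun x hx y hy => zFef_mul hfact hji hn hjn cn hx hy) a1 a2 b1 b2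
end

section
/- Let S be a factorizable inverse monoid with zero, with semilattice of idempotents E and group of units G, such that the natural connection θ is a dual isomorphism from E onto a sublattice of L(G). Then any two subcentral (resp. central) idempotent series of S possess isomorphic subcentral (resp. central) refinements. -/
section Helpers

variable {S : Type*}

theorem idem_mul_idem_aux [InverseMonoid S] {e f : S} (he : IsIdempotentElem e)
    (hf : IsIdempotentElem f) : IsIdempotentElem (e * f) := by
  have he' : ∀ z, e * (e * z) = e * z := fun z => by rw [← mul_assoc, he.eq]
  have hf' : ∀ z, f * (f * z) = f * z := fun z => by rw [← mul_assoc, hf.eq]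
  have h1 := InverseMonoid.mul_inv_mul (e * f)
  have h2 := InverseMonoid.inv_mul_inv (e * f)
  generalize hx : (e * f)⁻¹ = x at h1 h2
  have h3 : f * x * e = x := by
    rw [← hx]
    apply InverseMonoid.inv_unique
    · rw [hx]
      calc e * f * (f * x * e) * (e * f) = e * (f * (f * (x * (e * (e * f))))) := by
            simp only [mul_assoc]
        _ = e * f * x * (e * f) := by rw [he', hf']; simp only [mul_assoc]
        _ = e * f := h1
    · rw [hx]
      calc f * x * e * (e * f) * (f * x * e) = f * (x * (e * (e * (f * (f * (x * e)))))) := by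
            simp only [mul_assoc]
        _ = f * (x * (e * f) * x) * e := by rw [he', hf']; simp only [mul_assoc]
        _ = f * x * e := by rw [h2]
  have h4 : x * x = x := by
    calc x * x = (f * x * e) * (f * x * e) := by rw [h3]
      _ = f * (x * (e * f) * x) * e := by simp only [mul_assoc]
      _ = x := by rw [h2, h3]
  have h5 : e * f = x⁻¹ := InverseMonoid.inv_unique _ _ h2 h1
  have h6 : x = x⁻¹ := InverseMonoid.inv_unique _ _ (by rw [h4, h4]) (by rw [h4, h4])
  rw [h5, ← h6]; exact h4

theorem idem_comm [InverseMonoid S] {e f : S} (he : IsIdempotentElem e)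
    (hf : IsIdempotentElem f) : e * f = f * e := by
  have he' : ∀ z, e * (e * z) = e * z := fun z => by rw [← mul_assoc, he.eq]
  have hf' : ∀ z, f * (f * z) = f * z := fun z => by rw [← mul_assoc, hf.eq]
  have h1 := idem_mul_idem_aux he hf
  have h2 := idem_mul_idem_aux hf he
  have h3 : f * e = (e * f)⁻¹ := InverseMonoid.inv_unique _ _
    (by
      have := h1.eq
      simp only [mul_assoc] at this ⊢
      rw [he', hf', this])
    (by
      have := h2.eq
      simp only [mul_assoc] at this ⊢
      rw [hf', he', this])
  have h4 : e * f = (e * f)⁻¹ := InverseMonoid.inv_unique _ _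
    (by rw [h1.eq, h1.eq]) (by rw [h1.eq, h1.eq])
  rw [h3, ← h4]

theorem mem_natconn [Monoid S] {e : S} {g : Sˣ} : g ∈ natconn e ↔ e * (g : S) = e := Iff.rfl

theorem natLe_iff [InverseMonoid S] {e f : S} (he : IsIdempotentElem e) :
    NatLe e f ↔ e * f = e := by
  constructor
  · rintro ⟨k, hk, h⟩
    have hke : k * e = e := by rw [h, ← mul_assoc, hk.eq]
    have : e * k = e := by rw [idem_comm he hk, hke]
    calc e * f = (e * k) * f := by rw [this]
      _ = e * e := by rw [mul_assoc, ← h]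
      _ = e := he.eq
  · intro h; exact ⟨e, he, h.symm⟩

/-- the centralizer of `e` in the group of units -/
def NN [Monoid S] (e : S) : Subgroup Sˣ where
  carrier := {g : Sˣ | (g : S) * e = e * g}
  one_mem' := by simp
  mul_mem' := by
    intro a b ha hb
    simp only [Set.mem_setOf_eq, Units.val_mul] at *
    rw [mul_assoc, hb, ← mul_assoc, ha, mul_assoc]
  inv_mem' := by
    intro a ha
    simp only [Set.mem_setOf_eq] at *
    rw [Units.inv_mul_eq_iff_eq_mul, ← mul_assoc, ha, mul_assoc, Units.mul_inv, mul_one]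

theorem mem_NN [Monoid S] {e : S} {g : Sˣ} : g ∈ NN e ↔ (g : S) * e = e * g := Iff.rfl

theorem conj_idem [Monoid S] {e : S} (he : IsIdempotentElem e) (g : Sˣ) :
    IsIdempotentElem ((g : S) * e * (g⁻¹ : Sˣ)) := by
  unfold IsIdempotentElem
  simp only [mul_assoc, Units.inv_mul_cancel_left]
  rw [← mul_assoc e e, he.eq]

theorem natconn_le_NN [InverseMonoid S] {e : S} (he : IsIdempotentElem e) :
    natconn e ≤ NN e := by
  intro g hg
  have hgi := mem_natconn.1 ((natconn e).inv_mem hg)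
  rw [mem_natconn] at hg
  have hf := conj_idem he g
  rw [mul_assoc, hgi] at hf
  have h := idem_comm he hf
  rw [← mul_assoc, hg, he.eq, mul_assoc, he.eq] at h
  rw [mem_NN, hg, ← h]

theorem unit_eq [InverseMonoid S] {p q : S} (hp : IsIdempotentElem p)
    (hq : IsIdempotentElem q) {g k : Sˣ} (h : p * (g : S) = q * k) : p = q := by
  have h1 : p = q * (k * (g⁻¹ : Sˣ)) := by
    rw [← mul_assoc, ← h, mul_assoc, Units.mul_inv, mul_one]
  have h2 : q = p * (g * (k⁻¹ : Sˣ)) := by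
    rw [← mul_assoc, h, mul_assoc, Units.mul_inv, mul_one]
  have h3 : q * p = p := by rw [h1, ← mul_assoc, hq.eq]
  have h4 : p * q = q := by
    have : p * (p * (g * (k⁻¹ : Sˣ))) = p * (g * (k⁻¹ : Sˣ)) := by rw [← mul_assoc, hp.eq]
    rwa [← h2] at this
  rw [← h3, idem_comm hq hp, h4]

theorem NN_mul [Monoid S] {e f : S} : NN e ⊓ NN f ≤ NN (e * f) := by
  rintro g ⟨h1, h2⟩
  have h1 := mem_NN.1 h1
  have h2 := mem_NN.1 h2
  rw [mem_NN, ← mul_assoc, h1, mul_assoc, h2, mul_assoc]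

theorem NN_conj [Monoid S] {e : S} {g : Sˣ} (h : g ∈ NN e) (u : Sˣ) :
    g⁻¹ * u * g ∈ natconn e ↔ u ∈ natconn e := by
  have hi := mem_NN.1 ((NN e).inv_mem h)
  have h := mem_NN.1 h
  simp only [mem_natconn, Units.val_mul]
  rw [← mul_assoc, ← mul_assoc, ← hi]
  constructor
  · intro h1
    rw [mul_assoc, mul_assoc, Units.inv_mul_eq_iff_eq_mul, ← mul_assoc, h, Units.mul_left_inj] at h1
    exact h1
  · intro h1
    rw [mul_assoc, mul_assoc, Units.inv_mul_eq_iff_eq_mul, ← mul_assoc, h, h1]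

theorem natconn_conj [Monoid S] {e : S} {g : Sˣ} (u : Sˣ) :
    u ∈ natconn ((g : S) * e * (g⁻¹ : Sˣ)) ↔ g⁻¹ * u * g ∈ natconn e := by
  simp only [mem_natconn, Units.val_mul]
  constructor
  · intro h
    simp only [mul_assoc, Units.mul_right_inj] at h
    rw [← mul_assoc e, ← mul_assoc, ← Units.eq_mul_inv_iff_mul_eq] 
    simpa only [mul_assoc] using h
  · intro h
    simp only [mul_assoc, Units.mul_right_inj]
    rw [← mul_assoc e, ← mul_assoc, ← Units.eq_mul_inv_iff_mul_eq] at h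
    simpa only [mul_assoc] using h

theorem NN_of_inf [Monoid S] (hθ : NatconnDualIso S) {e f m : S}
    (hm : IsIdempotentElem m) (h : natconn m = natconn e ⊓ natconn f) :
    NN e ⊓ NN f ≤ NN m := by
  rintro g ⟨h1, h2⟩
  have key : (g : S) * m * (g⁻¹ : Sˣ) = m := by
    apply hθ.1 _ _ (conj_idem hm g) hm
    ext u
    rw [natconn_conj, h, Subgroup.mem_inf, Subgroup.mem_inf, NN_conj h1, NN_conj h2]
  rw [mem_NN]
  nth_rewrite 2 [← key]
  simp [mul_assoc]

theorem natconn_mul [InverseMonoid S] (hθ : NatconnDualIso S) {e f : S}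
    (he : IsIdempotentElem e) (hf : IsIdempotentElem f) :
    natconn (e * f) = natconn e ⊔ natconn f := by
  obtain ⟨h, hh, heq⟩ := (hθ.2.2 e f he hf).1
  have hef := idem_mul_idem_aux he hf
  apply le_antisymm
  · rw [← heq, ← hθ.2.1 _ _ hh hef, natLe_iff hh, ← mul_assoc]
    have h1 : NatLe h e := by rw [hθ.2.1 _ _ hh he, heq]; exact le_sup_left
    have h2 : NatLe h f := by rw [hθ.2.1 _ _ hh hf, heq]; exact le_sup_right
    rw [natLe_iff hh] at h1 h2
    rw [h1, h2]
  · refine sup_le ?_ ?_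
    · rw [← hθ.2.1 _ _ hef he, natLe_iff hef, idem_comm he hf, mul_assoc, he.eq]
    · rw [← hθ.2.1 _ _ hef hf, natLe_iff hef, mul_assoc, hf.eq]

theorem mem_upfilter_iff [InverseMonoid S] (hfact : Factorizable S) {e s : S}
    (he : IsIdempotentElem e) :
    s ∈ upfilter e ↔ ∃ (p : S) (g : Sˣ), IsIdempotentElem p ∧ e * p = e ∧ g ∈ natconn e ∧
      s = p * g := by
  constructor
  · intro hs
    have hs := (natLe_iff he).1 hs
    obtain ⟨p, g, hp, ⟨g, rfl⟩, rfl⟩ := hfact s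
    have h1 : e * p = e := by
      apply unit_eq (idem_mul_idem_aux he hp) he (g := g) (k := 1)
      rw [mul_assoc, hs]; simp
    refine ⟨p, g, hp, h1, ?_, rfl⟩
    rw [mem_natconn]
    rw [← mul_assoc, h1] at hs; exact hs
  · rintro ⟨p, g, hp, h1, h2, rfl⟩
    apply (natLe_iff he).2
    rw [← mul_assoc, h1, h2]

theorem centralIn_iff [InverseMonoid S] (hfact : Factorizable S) {e f : S}
    (he : IsIdempotentElem e) (hf : IsIdempotentElem f) :
    CentralIn (upfilter e) f ↔ NatLe e f ∧ natconn e ≤ NN f := by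
  constructor
  · rintro ⟨h1, h2⟩
    refine ⟨h1, fun g hg => ?_⟩
    exact (h2 g ⟨e, he, (mem_natconn.1 hg).symm⟩).symm
  · rintro ⟨h1, h2⟩
    refine ⟨h1, fun s hs => ?_⟩
    obtain ⟨p, g, hp, h3, h4, rfl⟩ := (mem_upfilter_iff hfact he).1 hs
    rw [mul_assoc, mem_NN.1 (h2 h4), ← mul_assoc, ← mul_assoc, idem_comm hf hp]

theorem central_iff [InverseMonoid S] (hfact : Factorizable S) {f : S}
    (hf : IsIdempotentElem f) :
    CentralIn Set.univ f ↔ NN f = ⊤ := by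
  constructor
  · rintro ⟨-, h2⟩
    rw [eq_top_iff]
    exact fun g _ => (h2 g trivial).symm
  · intro h
    refine ⟨trivial, fun s _ => ?_⟩
    obtain ⟨p, g, hp, ⟨g, rfl⟩, rfl⟩ := hfact s
    have hg : g ∈ NN f := by rw [h]; trivial
    rw [mul_assoc, mem_NN.1 hg, ← mul_assoc, ← mul_assoc, idem_comm hf hp]

theorem mem_Fef_iff [InverseMonoid S] (hfact : Factorizable S) {e f s : S}
    (he : IsIdempotentElem e) (hf : IsIdempotentElem f) (hef : e * f = e) :
    s ∈ Fef e f ↔ ∃ (p : S) (g : Sˣ), IsIdempotentElem p ∧ e * p = e ∧ p * f = p ∧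
      g ∈ natconn e ∧ s = p * g := by
  constructor
  · rintro ⟨t, ht, rfl⟩
    obtain ⟨p, g, hp, h3, h4, rfl⟩ := (mem_upfilter_iff hfact he).1 ht
    refine ⟨f * p, g, idem_mul_idem_aux hf hp, ?_, ?_, h4, ?_⟩
    · rw [← mul_assoc, hef, h3]
    · rw [idem_comm hf hp, mul_assoc, hf.eq]
    · simp only [mul_assoc]
  · rintro ⟨p, g, hp, h1, h2, h3, rfl⟩
    refine ⟨p * g, (mem_upfilter_iff hfact he).2 ⟨p, g, hp, h1, h3, rfl⟩, ?_⟩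
    simp only
    rw [← mul_assoc, idem_comm hf hp, h2]

theorem SubIso.symm' [Monoid S] {A B : Set S} (h : SubIso A B)
    (hA : ∀ a ∈ A, ∀ b ∈ A, a * b ∈ A) : SubIso B A := by
  obtain ⟨φ, hb, hm⟩ := h
  have hinv := hb.invOn_invFunOn
  have hb' : Set.BijOn (Function.invFunOn φ A) B A := (Set.bijOn_comm hinv).2 hb
  refine ⟨_, hb', fun a ha b hb1 => ?_⟩
  have h1 := hb'.mapsTo ha
  have h2 := hb'.mapsTo hb1
  have := hm _ h1 _ h2
  rw [hinv.2 ha, hinv.2 hb1] at this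
  rw [← this, hinv.1 (hA _ h1 _ h2)]

theorem SubIso.trans' [Monoid S] {A B C : Set S} (h : SubIso A B) (h' : SubIso B C) :
    SubIso A C := by
  obtain ⟨φ, hb, hm⟩ := h
  obtain ⟨ψ, hb', hm'⟩ := h'
  refine ⟨ψ ∘ φ, hb'.comp hb, fun a ha b hb1 => ?_⟩
  simp only [Function.comp]
  rw [hm a ha b hb1, hm' _ (hb.mapsTo ha) _ (hb.mapsTo hb1)]

theorem mem_sup_of_NN [InverseMonoid S] {n x : S} 
    {H : Subgroup Sˣ} (hH : H ≤ NN n) {u : Sˣ} (hu : u ∈ natconn n ⊔ H) :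
    ∃ a ∈ natconn n, ∃ b ∈ H, a * b = u := by
  have hc : ∀ b ∈ H, ∀ a ∈ natconn n, b⁻¹ * a * b ∈ natconn n := fun b hb a ha =>
    (NN_conj (hH hb) a).2 ha
  rw [Subgroup.sup_eq_closure] at hu
  induction hu using Subgroup.closure_induction with
  | mem x hx =>
    rcases hx with hx | hx
    · exact ⟨x, hx, 1, H.one_mem, by simp⟩
    · exact ⟨1, Subgroup.one_mem _, x, hx, by simp⟩
  | one => exact ⟨1, Subgroup.one_mem _, 1, H.one_mem, by simp⟩
  | inv x _ hx =>
    obtain ⟨a, ha, b, hb, rfl⟩ := hx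
    exact ⟨b⁻¹ * a⁻¹ * b, hc b hb _ (Subgroup.inv_mem _ ha), b⁻¹, H.inv_mem hb, by group⟩
  | mul x y _ _ hx hy =>
    obtain ⟨a, ha, b, hb, rfl⟩ := hx
    obtain ⟨a', ha', b', hb', rfl⟩ := hy
    refine ⟨a * (b * a' * b⁻¹), Subgroup.mul_mem _ ha ?_, b * b', H.mul_mem hb hb', by group⟩
    have := hc b⁻¹ (H.inv_mem hb) a' ha'
    simpa using this

theorem Fef_mul_closed [InverseMonoid S] (hfact : Factorizable S) {e f : S}
    (he : IsIdempotentElem e) (hf : IsIdempotentElem f) (hc : CentralIn (upfilter e) f) :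
    ∀ a ∈ Fef e f, ∀ b ∈ Fef e f, a * b ∈ Fef e f := by
  rintro _ ⟨s, hs, rfl⟩ _ ⟨t, ht, rfl⟩
  refine ⟨s * t, ?_, ?_⟩
  · have h1 := (natLe_iff he).1 hs
    have h2 := (natLe_iff he).1 ht
    apply (natLe_iff he).2
    rw [← mul_assoc, h1, h2]
  · have := hc.2 s hs
    simp only
    calc f * (s * t) = f * f * s * t := by rw [hf.eq, mul_assoc]
      _ = f * (f * s) * t := by simp only [mul_assoc]
      _ = f * (s * f) * t := by rw [this]
      _ = f * s * (f * t) := by simp only [mul_assoc]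

/-- second isomorphism theorem -/
theorem second_iso [InverseMonoid S] (hfact : Factorizable S) (hθ : NatconnDualIso S)
    {h n m : S} (hh : IsIdempotentElem h) (hn : IsIdempotentElem n) (hm : IsIdempotentElem m)
    (hN : natconn h ≤ NN n) (hmeq : natconn m = natconn h ⊓ natconn n) :
    SubIso (Fef h m) (Fef (n * h) n) := by
  have hle : ∀ {x y : S}, IsIdempotentElem x → IsIdempotentElem y →
      (x * y = x ↔ natconn y ≤ natconn x) := fun hx hy => by
    rw [← natLe_iff hx, hθ.2.1 _ _ hx hy]
  have hhm : h * m = h := (hle hh hm).2 (hmeq ▸ inf_le_left)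
  have hnh := idem_mul_idem_aux hn hh
  have hnhn : n * h * n = n * h := by rw [mul_assoc, idem_comm hh hn, ← mul_assoc, hn.eq]
  have hmod : ∀ {x : S}, IsIdempotentElem x → h * x = h → x * m = x → ∀ u : Sˣ,
      u ∈ natconn h → u ∈ natconn (n * x) → u ∈ natconn x := by
    intro x hx h1 h2 u hu1 hu2
    have hxh := (hle hh hx).1 h1
    have hmx := (hle hx hm).1 h2
    rw [natconn_mul hθ hn hx] at hu2
    obtain ⟨a, ha, b, hb, rfl⟩ := mem_sup_of_NN (x := x) (hxh.trans hN) hu2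
    refine Subgroup.mul_mem _ (hmx ?_) hb
    rw [hmeq]
    exact ⟨((natconn h).mul_mem_cancel_right (hxh hb)).1 hu1, ha⟩
  have hinj : ∀ {x y : S}, IsIdempotentElem x → h * x = h → x * m = x →
      IsIdempotentElem y → h * y = h → y * m = y → n * x = n * y →
      natconn x ≤ natconn y := by
    intro x y hx h1 h2 hy h3 h4 hxy u hu
    apply hmod hy h3 h4 u ((hle hh hx).1 h1 hu)
    rw [← hxy, natconn_mul hθ hn hx]
    exact Subgroup.mem_sup_right hu
  refine ⟨fun x => n * x, ⟨?_, ?_, ?_⟩, ?_⟩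
  · intro s hs
    obtain ⟨p, g, hp, h1, h2, h3, rfl⟩ := (mem_Fef_iff hfact hh hm hhm).1 hs
    apply (mem_Fef_iff hfact hnh hn hnhn).2
    refine ⟨n * p, g, idem_mul_idem_aux hn hp, ?_, ?_, ?_, ?_⟩
    · rw [← mul_assoc, hnhn, mul_assoc, h1]
    · rw [mul_assoc, idem_comm hp hn, ← mul_assoc, hn.eq]
    · rw [mem_natconn, mul_assoc, h3]
    · simp only [mul_assoc]
  · intro s hs t ht hst
    obtain ⟨p, g, hp, h1, h2, h3, rfl⟩ := (mem_Fef_iff hfact hh hm hhm).1 hs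
    obtain ⟨q, k, hq, h4, h5, h6, rfl⟩ := (mem_Fef_iff hfact hh hm hhm).1 ht
    simp only [← mul_assoc] at hst
    have hnp := unit_eq (idem_mul_idem_aux hn hp) (idem_mul_idem_aux hn hq) hst
    have hpq : p = q := hθ.1 _ _ hp hq (le_antisymm
      (hinj hp h1 h2 hq h4 h5 hnp) (hinj hq h4 h5 hp h1 h2 hnp.symm))
    subst hpq
    have hu : g * k⁻¹ ∈ natconn p := by
      apply hmod hp h1 h2
      · exact Subgroup.mul_mem _ h3 (Subgroup.inv_mem _ h6)
      · rw [mem_natconn, Units.val_mul, ← mul_assoc, hst, mul_assoc, Units.mul_inv, mul_one]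
    rw [mem_natconn, Units.val_mul, ← mul_assoc, Units.mul_inv_eq_iff_eq_mul] at hu
    exact hu
  · intro s hs
    obtain ⟨y, g, hy, h1, h2, h3, rfl⟩ := (mem_Fef_iff hfact hnh hn hnhn).1 hs
    obtain ⟨x, hx, hxeq⟩ := (hθ.2.2 y h hy hh).2
    have hny := (hle hy hn).1 h2
    have hyh := (hle hnh hy).1 h1
    rw [natconn_mul hθ hn hh] at h3 hyh
    obtain ⟨a, ha, b, hb, rfl⟩ := mem_sup_of_NN (x := x) hN h3
    have hnx : n * x = y := by
      apply hθ.1 _ _ (idem_mul_idem_aux hn hx) hy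
      rw [natconn_mul hθ hn hx, hxeq]
      apply le_antisymm
      · exact sup_le hny inf_le_left
      · intro u hu
        obtain ⟨a, ha, b, hb, rfl⟩ := mem_sup_of_NN (x := x) hN (hyh hu)
        exact Subgroup.mul_mem_sup ha ⟨((natconn y).mul_mem_cancel_left (hny ha)).1 hu, hb⟩
    refine ⟨x * b, ?_, ?_⟩
    · apply (mem_Fef_iff hfact hh hm hhm).2
      refine ⟨x, b, hx, ?_, ?_, hb, rfl⟩
      · rw [hle hh hx, hxeq]; exact inf_le_right
      · rw [hle hx hm, hxeq, hmeq]
        exact le_inf (inf_le_right.trans hny) inf_le_left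
    · simp only
      rw [← mul_assoc, hnx, Units.val_mul, ← mul_assoc, mem_natconn.1 (hny ha)]
  · intro s hs t ht
    obtain ⟨p, g, hp, h1, h2, h3, rfl⟩ := (mem_Fef_iff hfact hh hm hhm).1 hs
    have hc : n * (p * g) = p * g * n := by
      rw [mul_assoc, mem_NN.1 (hN h3), ← mul_assoc, ← mul_assoc, idem_comm hn hp]
    simp only
    calc n * (p * g * t) = n * n * (p * g) * t := by rw [hn.eq]; simp only [mul_assoc]
      _ = n * (n * (p * g)) * t := by simp only [mul_assoc]
      _ = n * (p * g * n) * t := by rw [hc]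
      _ = n * (p * g) * (n * t) := by simp only [mul_assoc]

/-- `j` is a join operation on idempotents. -/
def JoinOp [Monoid S] (j : S → S → S) : Prop :=
  ∀ e f, IsIdempotentElem e → IsIdempotentElem f →
    IsIdempotentElem (j e f) ∧ natconn (j e f) = natconn e ⊓ natconn f

theorem exists_joinOp [Monoid S] (hθ : NatconnDualIso S) : ∃ j : S → S → S, JoinOp j := by
  have : ∀ e f : S, ∃ h, IsIdempotentElem e → IsIdempotentElem f →
    IsIdempotentElem h ∧ natconn h = natconn e ⊓ natconn f := by
    intro e f
    by_cases he : IsIdempotentElem e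
    · by_cases hf : IsIdempotentElem f
      · obtain ⟨h, h1⟩ := (hθ.2.2 e f he hf).2
        exact ⟨h, fun _ _ => h1⟩
      · exact ⟨1, fun _ h => absurd h hf⟩
    · exact ⟨1, fun h => absurd h he⟩
  choose j hj using this
  exact ⟨j, hj⟩

/-- A normal step between idempotents. -/
structure Step [Monoid S] (a a' : S) : Prop where
  idl : IsIdempotentElem a
  idr : IsIdempotentElem a'
  le : natconn a' ≤ natconn a
  nor : natconn a ≤ NN a'

theorem zass_step [InverseMonoid S] (hθ : NatconnDualIso S) {j : S → S → S} (hj : JoinOp j)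
    {a a' b b' : S} (ha : Step a a') (hb : Step b b') :
    Step (a' * j a b) (a' * j a b') := by
  obtain ⟨h1, h1'⟩ := hj a b ha.idl hb.idl
  obtain ⟨h2, h2'⟩ := hj a b' ha.idl hb.idr
  have hi := idem_mul_idem_aux ha.idr h2
  refine ⟨idem_mul_idem_aux ha.idr h1, hi, ?_, ?_⟩
  · rw [natconn_mul hθ ha.idr h1, natconn_mul hθ ha.idr h2, h1', h2']
    exact sup_le_sup_left (inf_le_inf_left _ hb.le) _
  · rw [natconn_mul hθ ha.idr h1]
    refine sup_le ?_ ?_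
    · refine le_trans ?_ (natconn_le_NN hi)
      rw [natconn_mul hθ ha.idr h2]
      exact le_sup_left
    · rw [h1']
      refine le_trans (le_inf (inf_le_left.trans ha.nor) ?_) NN_mul
      exact le_trans (inf_le_inf (natconn_le_NN ha.idl) hb.nor) (NN_of_inf hθ h2 h2')

theorem zass_half [InverseMonoid S] (hfact : Factorizable S) (hθ : NatconnDualIso S)
    {j : S → S → S} (hj : JoinOp j)
    {a a' b b' : S} (ha : Step a a') (hb : Step b b') :
    SubIso (Fef (j a b) (j a' b * j a b')) (Fef (a' * j a b) (a' * j a b')) := by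
  obtain ⟨h1, h1'⟩ := hj a b ha.idl hb.idl
  obtain ⟨h2, h2'⟩ := hj a b' ha.idl hb.idr
  obtain ⟨h3, h3'⟩ := hj a' b ha.idr hb.idl
  have hn := idem_mul_idem_aux ha.idr h2
  have hst := zass_step hθ hj ha hb
  have hkl : j a b * j a b' = j a b := by
    rw [← natLe_iff h1, hθ.2.1 _ _ h1 h2, h1', h2']
    exact inf_le_inf_left _ hb.le
  have := second_iso hfact hθ (h := j a b) (n := a' * j a b') (m := j a' b * j a b')
    h1 hn (idem_mul_idem_aux h3 h2) ?_ ?_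
  · rwa [mul_assoc, idem_comm h2 h1, hkl] at this
  · refine le_trans ?_ hst.nor
    rw [natconn_mul hθ ha.idr h1]; exact le_sup_right
  · rw [natconn_mul hθ h3 h2, natconn_mul hθ ha.idr h2, h1', h2', h3']
    apply le_antisymm
    · exact sup_le (le_inf (inf_le_inf_right _ ha.le) (inf_le_left.trans le_sup_left))
        (le_inf (inf_le_inf_left _ hb.le) le_sup_right)
    · rintro u ⟨⟨hu1, hu2⟩, hu3⟩
      obtain ⟨x, hx, y, hy, rfl⟩ := mem_sup_of_NN (x := a) (inf_le_left.trans ha.nor) hu3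
      exact Subgroup.mul_mem_sup
        ⟨hx, ((natconn b).mul_mem_cancel_right (hb.le hy.2)).1 hu2⟩ hy

theorem zass [InverseMonoid S] (hfact : Factorizable S) (hθ : NatconnDualIso S)
    {j : S → S → S} (hj : JoinOp j)
    {a a' b b' : S} (ha : Step a a') (hb : Step b b') :
    SubIso (Fef (a' * j a b) (a' * j a b')) (Fef (b' * j b a) (b' * j b a')) := by
  have hjc : ∀ {e f : S}, IsIdempotentElem e → IsIdempotentElem f → j e f = j f e := by
    intro e f he hf
    apply hθ.1 _ _ (hj e f he hf).1 (hj f e hf he).1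
    rw [(hj e f he hf).2, (hj f e hf he).2, inf_comm]
  have h1 := zass_half hfact hθ hj ha hb
  have h2 := zass_half hfact hθ hj hb ha
  obtain ⟨i1, i1'⟩ := hj a b ha.idl hb.idl
  obtain ⟨i2, i2'⟩ := hj a b' ha.idl hb.idr
  obtain ⟨i3, i3'⟩ := hj a' b ha.idr hb.idl
  have e1 : j b a = j a b := hjc hb.idl ha.idl
  have e2 : j b' a * j b a' = j a' b * j a b' := by
    rw [hjc hb.idr ha.idl, hjc hb.idl ha.idr, idem_comm i2 i3]
  rw [e2] at h2
  nth_rewrite 1 [e1] at h2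
  refine SubIso.trans' (SubIso.symm' h1 ?_) h2
  have i4 := idem_mul_idem_aux i3 i2
  apply Fef_mul_closed hfact i1 i4
  rw [centralIn_iff hfact i1 i4]
  constructor
  · rw [hθ.2.1 _ _ i1 i4, natconn_mul hθ i3 i2, i1', i2', i3']
    exact sup_le (inf_le_inf_right _ ha.le) (inf_le_inf_left _ hb.le)
  · rw [i1']
    refine le_trans (le_inf ?_ ?_) NN_mul
    · exact le_trans (inf_le_inf ha.nor (natconn_le_NN hb.idl)) (NN_of_inf hθ i3 i3')
    · exact le_trans (inf_le_inf (natconn_le_NN ha.idl) hb.nor) (NN_of_inf hθ i2 i2')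

/-- A normal series, extended by `1` to all indices. -/
structure Ser [InverseMonoidWithZero S] (n : ℕ) (c : ℕ → S) : Prop where
  zero : c 0 = 0
  one : ∀ i, n ≤ i → c i = 1
  step : ∀ i, Step (c i) (c (i + 1))

/-- terms of the Schreier refinement -/
def TT [Monoid S] (j : S → S → S) (c c' : ℕ → S) (n' k : ℕ) : S :=
  c (k / n' + 1) * j (c (k / n')) (c' (k % n'))

theorem natconn_one' [Monoid S] : natconn (1 : S) = ⊥ := by
  ext g
  simp [mem_natconn, Subgroup.mem_bot]

theorem natconn_zero' [InverseMonoidWithZero S] : natconn (0 : S) = ⊤ := by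
  ext g
  simp [mem_natconn, InverseMonoidWithZero.zero_mul]

theorem TT_zero_right [InverseMonoidWithZero S] (hθ : NatconnDualIso S) {j : S → S → S}
    (hj : JoinOp j) {n : ℕ} {c : ℕ → S} (hc : Ser n c) (i : ℕ) :
    c (i + 1) * j (c i) 0 = c i := by
  have h0 : IsIdempotentElem (0 : S) := InverseMonoidWithZero.zero_mul 0
  have hs := hc.step i
  obtain ⟨i1, i1'⟩ := hj _ 0 hs.idl h0
  apply hθ.1 _ _ (idem_mul_idem_aux hs.idr i1) hs.idl
  rw [natconn_mul hθ hs.idr i1, i1', natconn_zero', inf_top_eq]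
  exact sup_eq_right.2 hs.le

theorem TT_one_right [InverseMonoidWithZero S] (hθ : NatconnDualIso S) {j : S → S → S}
    (hj : JoinOp j) {n : ℕ} {c : ℕ → S} (hc : Ser n c) (i : ℕ) :
    c (i + 1) * j (c i) 1 = c (i + 1) := by
  have h0 : IsIdempotentElem (1 : S) := one_mul 1
  have hs := hc.step i
  obtain ⟨i1, i1'⟩ := hj _ 1 hs.idl h0
  apply hθ.1 _ _ (idem_mul_idem_aux hs.idr i1) hs.idr
  rw [natconn_mul hθ hs.idr i1, i1', natconn_one', inf_bot_eq, sup_bot_eq]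

theorem TT_succ [InverseMonoidWithZero S] (hθ : NatconnDualIso S) {j : S → S → S}
    (hj : JoinOp j) {n n' : ℕ} {c c' : ℕ → S} (hc : Ser n c) (hc' : Ser n' c') (hn' : 0 < n')
    (k : ℕ) :
    TT j c c' n' (k + 1) = c (k / n' + 1) * j (c (k / n')) (c' (k % n' + 1)) := by
  have hlt := Nat.mod_lt k hn'
  have hk := Nat.div_add_mod k n'
  unfold TT
  rcases Nat.lt_or_ge (k % n' + 1) n' with h | h
  · have h1 : (k + 1) / n' = k / n' := by
      rw [Nat.div_eq_iff hn']
      rw [mul_comm] at hk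
      omega
    have h2 : (k + 1) % n' = k % n' + 1 := by
      rw [Nat.add_mod]; 
      rw [Nat.mod_eq_of_lt (a := 1) (by omega), Nat.mod_eq_of_lt h]
    rw [h1, h2]
  · have h3 : k + 1 = n' * (k / n' + 1) := by rw [mul_add, mul_one]; omega
    have h1 : (k + 1) / n' = k / n' + 1 := by
      conv_lhs => rw [h3]
      exact Nat.mul_div_cancel_left _ hn'
    have h2 : (k + 1) % n' = 0 := by
      rw [h3]; exact Nat.mul_mod_right _ _
    rw [h1, h2, hc'.zero, hc'.one _ h, TT_zero_right hθ hj hc, TT_one_right hθ hj hc]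

theorem TT_mul [InverseMonoidWithZero S] (hθ : NatconnDualIso S) {j : S → S → S}
    (hj : JoinOp j) {n n' : ℕ} {c c' : ℕ → S} (hc : Ser n c) (hc' : Ser n' c') (hn' : 0 < n')
    (i : ℕ) : TT j c c' n' (i * n') = c i := by
  unfold TT
  rw [Nat.mul_div_cancel _ hn', Nat.mul_mod_left, hc'.zero, TT_zero_right hθ hj hc]

theorem TT_step [InverseMonoidWithZero S] (hθ : NatconnDualIso S) {j : S → S → S}
    (hj : JoinOp j) {n n' : ℕ} {c c' : ℕ → S} (hc : Ser n c) (hc' : Ser n' c') (hn' : 0 < n')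
    (k : ℕ) : Step (TT j c c' n' k) (TT j c c' n' (k + 1)) := by
  rw [TT_succ hθ hj hc hc' hn']
  exact zass_step hθ hj (hc.step _) (hc'.step _)

theorem mul_add_mod_aux {a b n : ℕ} (h : b < n) : (a * n + b) % n = b := by
  rw [Nat.add_comm, Nat.add_mul_mod_self_right, Nat.mod_eq_of_lt h]

theorem TT_iso [InverseMonoidWithZero S] (hfact : Factorizable S) (hθ : NatconnDualIso S)
    {j : S → S → S}
    (hj : JoinOp j) {n n' : ℕ} {c c' : ℕ → S} (hc : Ser n c) (hc' : Ser n' c') (hn : 0 < n)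
    (hn' : 0 < n') : SeriesIso (n * n') (TT j c c' n') (n' * n) (TT j c' c n) := by
  refine ⟨mul_comm _ _, fun k => (k % n') * n + k / n', ?_, ?_⟩
  · have key : ∀ {p q k : ℕ}, 0 < p → 0 < q → k < p * q →
        (k % q) * p + k / q < q * p ∧ ((k % q * p + k / q) % p) * q + (k % q * p + k / q) / p = k := by
      intro p q k hp hq hk
      have h1 : k / q < p := Nat.div_lt_of_lt_mul (by rwa [mul_comm])
      have h2 := Nat.mod_lt k hq
      constructor
      · nlinarith
      · rw [mul_add_mod_aux h1, Nat.mul_comm (k % q) p, Nat.mul_add_div hp,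
          Nat.div_eq_of_lt h1, add_zero]
        exact Nat.div_add_mod' k q
    refine Set.BijOn.mk ?_ ?_ ?_
    · intro k hk; exact (key hn hn' hk).1
    · intro k hk l hl hkl
      simp only at hkl
      rw [← (key hn hn' hk).2, hkl, (key hn hn' hl).2]
    · intro k hk
      exact ⟨_, (key hn' hn hk).1, (key hn' hn hk).2⟩
  · intro k hk
    have h1 : k / n' < n := Nat.div_lt_of_lt_mul (by rwa [mul_comm])
    have h2 : (k % n' * n + k / n') % n = k / n' := mul_add_mod_aux h1
    have h3 : (k % n' * n + k / n') / n = k % n' := by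
      rw [Nat.mul_comm (k % n') n, Nat.mul_add_div hn, Nat.div_eq_of_lt h1, add_zero]
    rw [TT_succ hθ hj hc hc' hn', TT_succ hθ hj hc' hc hn]
    simp only [TT, h2, h3]
    exact zass hfact hθ hj (hc.step _) (hc'.step _)

theorem NN_one' [Monoid S] : NN (1 : S) = ⊤ := by
  ext g; simp [mem_NN]

theorem NN_zero' [InverseMonoidWithZero S] : NN (0 : S) = ⊤ := by
  ext g; simp [mem_NN, InverseMonoidWithZero.zero_mul, InverseMonoidWithZero.mul_zero]

theorem ser_of [InverseMonoidWithZero S] (hfact : Factorizable S) (hθ : NatconnDualIso S)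
    {n : ℕ} {c : ℕ → S} (hc : IsSubcentralSeries n c) : Ser n (fun i => c (min i n)) := by
  obtain ⟨h0, h1, h2, h3⟩ := hc
  refine ⟨by simpa using h0, fun i hi => by simpa [min_eq_right hi] using h1, fun i => ?_⟩
  rcases Nat.lt_or_ge i n with h | h
  · have e1 : min i n = i := by omega
    have e2 : min (i + 1) n = i + 1 := by omega
    have i1 := h2 i h.le
    have i2 := h2 (i + 1) h
    have := (centralIn_iff hfact i1 i2).1 (h3 i h)
    simp only [e1, e2]
    exact ⟨i1, i2, (hθ.2.1 _ _ i1 i2).1 this.1, this.2⟩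
  · have e1 : min i n = n := by omega
    have e2 : min (i + 1) n = n := by omega
    simp only [e1, e2, h1]
    have i1 : IsIdempotentElem (1 : S) := one_mul 1
    exact ⟨i1, i1, le_rfl, by rw [NN_one']; exact le_top⟩

theorem sub_of_central [InverseMonoidWithZero S] 
    {n : ℕ} {c : ℕ → S} (hc : IsCentralSeries n c) : IsSubcentralSeries n c := by
  obtain ⟨h0, h1, h2, h3, h4⟩ := hc
  exact ⟨h0, h1, h2, fun i hi => ⟨h3 i hi, fun s _ => (h4 i hi).2 s trivial⟩⟩

theorem NN_of_central [InverseMonoidWithZero S] (hfact : Factorizable S)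
    {n : ℕ} {c : ℕ → S} (hc : IsCentralSeries n c) (i : ℕ) : NN (c (min i n)) = ⊤ := by
  obtain ⟨h0, h1, h2, h3, h4⟩ := hc
  have hle : min i n ≤ n := min_le_right _ _
  generalize min i n = k at hle
  cases k with
  | zero => rw [h0, NN_zero']
  | succ k => exact (central_iff hfact (h2 _ hle)).1 (h4 k hle)

theorem TT_subcentral [InverseMonoidWithZero S] (hfact : Factorizable S)
    (hθ : NatconnDualIso S) {j : S → S → S}
    (hj : JoinOp j) {n n' : ℕ} {c c' : ℕ → S} (hc : Ser n c) (hc' : Ser n' c') (hn' : 0 < n') :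
    IsSubcentralSeries (n * n') (TT j c c' n') := by
  have hst := TT_step hθ hj hc hc' hn'
  refine ⟨?_, ?_, fun i _ => (hst i).idl, fun i _ => ?_⟩
  · have := TT_mul hθ hj hc hc' hn' 0
    rw [zero_mul] at this
    rw [this, hc.zero]
  · rw [TT_mul hθ hj hc hc' hn', hc.one _ le_rfl]
  · rw [centralIn_iff hfact (hst i).idl (hst i).idr, hθ.2.1 _ _ (hst i).idl (hst i).idr]
    exact ⟨(hst i).le, (hst i).nor⟩

theorem TT_central [InverseMonoidWithZero S] (hfact : Factorizable S)
    (hθ : NatconnDualIso S) {j : S → S → S}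
    (hj : JoinOp j) {n n' : ℕ} {c c' : ℕ → S} (hc : Ser n c) (hc' : Ser n' c') (hn' : 0 < n')
    (hN : ∀ i, NN (c i) = ⊤) (hN' : ∀ i, NN (c' i) = ⊤) :
    IsCentralSeries (n * n') (TT j c c' n') := by
  obtain ⟨h0, h1, h2, h3⟩ := TT_subcentral hfact hθ hj hc hc' hn'
  refine ⟨h0, h1, h2, fun i hi => (h3 i hi).1, fun i hi => ?_⟩
  rw [central_iff hfact (h2 _ hi), eq_top_iff]
  unfold TT
  obtain ⟨i1, i1'⟩ := hj _ _ (hc.step ((i + 1) / n')).idl (hc'.step ((i + 1) % n')).idl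
  refine le_trans (le_inf (hN _).ge ?_) NN_mul
  refine le_trans (le_inf (hN _).ge (hN' _).ge) (NN_of_inf hθ i1 i1')

theorem TT_refines [InverseMonoidWithZero S]
    (hθ : NatconnDualIso S) {j : S → S → S}
    (hj : JoinOp j) {n n' : ℕ} {c c' : ℕ → S} (hc : Ser n (fun i => c (min i n)))
    (hc' : Ser n' c') (hn' : 0 < n') :
    ∀ i ≤ n, ∃ k ≤ n * n', TT j (fun i => c (min i n)) c' n' k = c i := by
  intro i hi
  refine ⟨i * n', Nat.mul_le_mul_right _ hi, ?_⟩
  rw [TT_mul hθ hj hc hc' hn']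
  simp [min_eq_left hi]

theorem series_refl [Monoid S] (n : ℕ) (c : ℕ → S) : SeriesIso n c n c :=
  ⟨rfl, id, Set.bijOn_id _, fun _ _ => ⟨id, Set.bijOn_id _, fun _ _ _ _ => rfl⟩⟩

theorem trivial_of [InverseMonoidWithZero S] {n : ℕ} {c : ℕ → S} (hn : n = 0)
    (hc : IsSubcentralSeries n c) (x y : S) : x = y := by
  have h : (0 : S) = 1 := by rw [← hc.1, ← hc.2.1, hn]
  rw [← one_mul x, ← one_mul y, ← h, InverseMonoidWithZero.zero_mul,
    InverseMonoidWithZero.zero_mul]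

end Helpers

/-- In a factorizable inverse monoid with zero whose natural connection is
a dual isomorphism onto a sublattice of the lattice of subgroups of the group of units,
any two subcentral (resp. central) idempotent series possess isomorphic subcentral
(resp. central) refinements. -/
theorem stmt_8 {S : Type*} [InverseMonoidWithZero S] (hfact : Factorizable S)
    (hθ : NatconnDualIso S) :
    (∀ (n : ℕ) (c : ℕ → S) (n' : ℕ) (c' : ℕ → S),
      IsSubcentralSeries n c → IsSubcentralSeries n' c' →
      ∃ (m : ℕ) (d : ℕ → S) (m' : ℕ) (d' : ℕ → S),
        IsSubcentralSeries m d ∧ IsSubcentralSeries m' d' ∧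
        (∀ i ≤ n, ∃ j ≤ m, d j = c i) ∧ (∀ i ≤ n', ∃ j ≤ m', d' j = c' i) ∧
        SeriesIso m d m' d') ∧
    (∀ (n : ℕ) (c : ℕ → S) (n' : ℕ) (c' : ℕ → S),
      IsCentralSeries n c → IsCentralSeries n' c' →
      ∃ (m : ℕ) (d : ℕ → S) (m' : ℕ) (d' : ℕ → S),
        IsCentralSeries m d ∧ IsCentralSeries m' d' ∧
        (∀ i ≤ n, ∃ j ≤ m, d j = c i) ∧ (∀ i ≤ n', ∃ j ≤ m', d' j = c' i) ∧
        SeriesIso m d m' d') := by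
  obtain ⟨j, hj⟩ := exists_joinOp hθ
  constructor
  · intro n c n' c' hc hc'
    rcases Nat.eq_zero_or_pos n with hn | hn
    · have tr := trivial_of hn hc
      exact ⟨n', c', n', c', hc', hc', fun i _ => ⟨0, Nat.zero_le _, tr _ _⟩,
        fun i hi => ⟨i, hi, rfl⟩, series_refl _ _⟩
    rcases Nat.eq_zero_or_pos n' with hn' | hn'
    · have tr := trivial_of hn' hc'
      exact ⟨n, c, n, c, hc, hc, fun i hi => ⟨i, hi, rfl⟩,
        fun i _ => ⟨0, Nat.zero_le _, tr _ _⟩, series_refl _ _⟩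
    have s := ser_of hfact hθ hc
    have s' := ser_of hfact hθ hc'
    exact ⟨_, _, _, _, TT_subcentral hfact hθ hj s s' hn', TT_subcentral hfact hθ hj s' s hn,
      TT_refines hθ hj s s' hn', TT_refines hθ hj s' s hn, TT_iso hfact hθ hj s s' hn hn'⟩
  · intro n c n' c' hc hc'
    rcases Nat.eq_zero_or_pos n with hn | hn
    · have tr := trivial_of hn (sub_of_central hc)
      exact ⟨n', c', n', c', hc', hc', fun i _ => ⟨0, Nat.zero_le _, tr _ _⟩,
        fun i hi => ⟨i, hi, rfl⟩, series_refl _ _⟩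
    rcases Nat.eq_zero_or_pos n' with hn' | hn'
    · have tr := trivial_of hn' (sub_of_central hc')
      exact ⟨n, c, n, c, hc, hc, fun i hi => ⟨i, hi, rfl⟩,
        fun i _ => ⟨0, Nat.zero_le _, tr _ _⟩, series_refl _ _⟩
    have s := ser_of hfact hθ (sub_of_central hc)
    have s' := ser_of hfact hθ (sub_of_central hc')
    have t := NN_of_central hfact hc
    have t' := NN_of_central hfact hc'
    exact ⟨_, _, _, _, TT_central hfact hθ hj s s' hn' t t',
      TT_central hfact hθ hj s' s hn t' t,
      TT_refines hθ hj s s' hn', TT_refines hθ hj s' s hn, TT_iso hfact hθ hj s s' hn hn'⟩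
end
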